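/- arXiv:2511.20747 — 3 statements merged into one kernel-verified Lean document; each statement's English description precedes it below -/
import Mathlib

section
/- Fix a constant c with 0 < c < 2. Then there exists a constant C > 0 (depending only on c) such that the following holds for all positive integers n_A, n_B, n_C, all integers m with 1 ≤ m ≤ min(n_A, n_B), and all real h with δ := h² − 2^(−2m) > 0. Set d_A = 2^{n_A}, d_B = 2^{n_B}, d_C = 2^{n_C}, d = d_A·d_B·d_C, let ψ = U e₁ be a Haar random state on ℂ^{d_A}⊗ℂ^{d_B}⊗ℂ^{d_C}, and let ρ_AB be its reduced density matrix on the first two factors. Let Π_m be the orthogonal projection onto m EPR pairs between the first m qubits of A and the first m qubits of B (tensored with the identity on the remaining qubits of A and B). Then the Haar probability of the (closed, hence measurable) set of unitaries U ∈ U(d) for which there exist unitaries U_A ∈ U(d_A) and U_B ∈ U(d_B) with Tr[(U_A⊗U_B) ρ_AB (U_A⊗U_B)† Π_m] ≥ h² satisfies: log Prob ≤ −c·δ²·d + C·(d_A² + d_B²)·(1 + log(1/δ)). -/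
/-!
Theorem 3 of the paper (precise LU-distillation no-go for tripartite Haar random
states): for a Haar random state `ψ = U e₁` on `ℂ^{2^nA} ⊗ ℂ^{2^nB} ⊗ ℂ^{2^nC}`,
the probability that some local unitary `U_A ⊗ U_B` brings the reduced state
`ρ_AB` to have overlap at least `h²` with the projector onto `m` EPR pairs is
bounded by `exp(-c δ² d + C (d_A² + d_B²)(1 + log(1/δ)))` where
`δ = h² - 2^{-2m}`.
-/

open MeasureTheory Matrix
open scoped Kronecker Classical

noncomputable section

/-- `ℂ²` tensor factors: a basis index for `(ℂ²)^{⊗ n}`. -/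
abbrev QubitIdx (n : ℕ) := Fin n → Fin 2

instance matrixMeasurableSpace (I : Type*) : MeasurableSpace (Matrix I I ℂ) :=
  borel _

instance matrixBorelSpace (I : Type*) : BorelSpace (Matrix I I ℂ) := ⟨rfl⟩

/-- The Haar random state `ψ = U e₁`: the column of the unitary `U` at the fixed
standard basis index `default`. -/
def haarState {I : Type*} [DecidableEq I] [Fintype I] [Inhabited I]
    (U : Matrix.unitaryGroup I ℂ) : I → ℂ :=
  fun i => U.1 i default

/-- Reduced density matrix on the first two tensor factors of a tripartite vector:
`ρ_AB[(a,b),(a',b')] = ∑_c ψ(a,b,c) conj (ψ(a',b',c))`. -/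
def rhoAB {IA IB IC : Type*} [Fintype IC] (ψ : IA × IB × IC → ℂ) :
    Matrix (IA × IB) (IA × IB) ℂ :=
  Matrix.of fun p q => ∑ x : IC, ψ (p.1, p.2, x) * (starRingEnd ℂ) (ψ (q.1, q.2, x))

/-- The orthogonal projection `Π_m` onto `m` EPR pairs between the first `m` qubits
of `A` and the first `m` qubits of `B`, tensored with the identity on all remaining
qubits.  Its matrix entries are
`Π_m[(a,b),(a',b')] = 2^{-m} [∀ k<m, a_k = b_k] [∀ k<m, a'_k = b'_k]
  [∀ k ≥ m, a_k = a'_k] [∀ k ≥ m, b_k = b'_k]`. -/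
def eprProj (nA nB m : ℕ) :
    Matrix (QubitIdx nA × QubitIdx nB) (QubitIdx nA × QubitIdx nB) ℂ :=
  Matrix.of fun p q =>
    if (∀ (k : ℕ) (hA : k < nA) (hB : k < nB), k < m →
          p.1 ⟨k, hA⟩ = p.2 ⟨k, hB⟩ ∧ q.1 ⟨k, hA⟩ = q.2 ⟨k, hB⟩)
        ∧ (∀ k : Fin nA, m ≤ (k : ℕ) → p.1 k = q.1 k)
        ∧ (∀ k : Fin nB, m ≤ (k : ℕ) → p.2 k = q.2 k)
    then ((2 : ℂ) ^ m)⁻¹ else 0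

/-!
A vector whose entries are independent standard complex Gaussians has unitarily invariant law, so
its direction is a Haar random state. For an orthogonal projection `E` of trace `p d`, the tail
event `q ≤ ⟨ψ, E ψ⟩` is a condition on the direction alone, and Chernoff's method for the explicit
Gaussian integral bounds its probability by `exp (-d D(p ‖ q))`, where `D(p ‖ q) ≥ 2 (q - p)²` is
the Bernoulli relative entropy.

For a fixed local unitary `W = U_A ⊗ U_B`, the overlap `Tr (W ρ_AB W† P)` is the expectation of the
projection `(W† P W) ⊗ 1_C`, whose normalized trace does not depend on `W`, and it is 2-Lipschitz
in `W` for the operator norm. A volume comparison yields `ε`-nets of `U(d_A) ⊗ U(d_B)` with at most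
`(6 / ε) ^ (2 (d_A² + d_B²))` elements. A union bound over such a net of mesh proportional to
`(2 - c) δ` costs the factor `exp (C (d_A² + d_B²) (1 + log (1 / δ)))` and degrades the exponent
`2 δ² d` to no less than `c δ² d`.
-/

open Metric Module WithLp
open scoped NNReal ENNReal Matrix.Norms.L2Operator

variable {I : Type*} [Fintype I]

/-- The expectation value `Re ⟨v, P v⟩` of the observable `P` in the pure state `v`, which is not
assumed to be normalized. -/
def expectation (P : Matrix I I ℂ) (v : I → ℂ) : ℝ := (star v ⬝ᵥ P *ᵥ v).re

lemma continuous_expectation (P : Matrix I I ℂ) : Continuous (expectation P) := by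
  unfold expectation
  fun_prop

lemma expectation_real_smul (P : Matrix I I ℂ) (r : ℝ) (v : I → ℂ) :
    expectation P (r • v) = r ^ 2 * expectation P v := by
  simp only [expectation, mulVec_smul, star_smul, smul_dotProduct, dotProduct_smul, star_trivial,
    Complex.real_smul, Complex.re_ofReal_mul]
  ring

lemma expectation_mulVec (P M : Matrix I I ℂ) (v : I → ℂ) :
    expectation P (M *ᵥ v) = expectation (Mᴴ * P * M) v := by
  simp only [expectation, star_mulVec, ← mulVec_mulVec, dotProduct_mulVec, vecMul_vecMul]

lemma expectation_eq_re_inner (P : Matrix I I ℂ) (v : I → ℂ) :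
    expectation P v = (inner ℂ (toLp 2 v) (toLp 2 (P *ᵥ v))).re := by
  rw [expectation, EuclideanSpace.inner_toLp_toLp, dotProduct_comm]

variable [DecidableEq I]

lemma expectation_one (v : I → ℂ) : expectation 1 v = ‖toLp 2 v‖ ^ 2 := by
  rw [expectation_eq_re_inner, one_mulVec, ← inner_self_eq_norm_sq (𝕜 := ℂ), RCLike.re_to_complex]

lemma expectation_diagonal (l : I → ℝ) (v : I → ℂ) :
    expectation (diagonal fun i => (l i : ℂ)) v = ∑ i, l i * ‖v i‖ ^ 2 := by
  simp only [expectation, dotProduct, Complex.re_sum, mulVec_diagonal]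
  refine Finset.sum_congr rfl fun i _ => ?_
  simp only [Complex.sq_norm, Complex.normSq_apply, Pi.star_apply, RCLike.star_def, Complex.mul_re,
    Complex.conj_re, Complex.conj_im, Complex.ofReal_re, Complex.ofReal_im, Complex.mul_im]
  ring

lemma expectation_le_l2_opNorm (P : Matrix I I ℂ) (v : I → ℂ) :
    expectation P v ≤ ‖P‖ * ‖toLp 2 v‖ ^ 2 :=
  calc expectation P v ≤ ‖toLp 2 v‖ * ‖toLp 2 (P *ᵥ v)‖ := by
        rw [expectation_eq_re_inner]
        exact (Complex.re_le_norm _).trans (norm_inner_le_norm _ _)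
    _ ≤ ‖toLp 2 v‖ * (‖P‖ * ‖toLp 2 v‖) := by
        gcongr
        exact l2_opNorm_mulVec P (toLp 2 v)
    _ = ‖P‖ * ‖toLp 2 v‖ ^ 2 := by ring

lemma norm_toLp_mulVec_of_mem_unitaryGroup {U : Matrix I I ℂ} (hU : U ∈ unitaryGroup I ℂ)
    (v : I → ℂ) : ‖toLp 2 (U *ᵥ v)‖ = ‖toLp 2 v‖ := by
  have h : Uᴴ * U = 1 := mem_unitaryGroup_iff'.1 hU
  refine (sq_eq_sq₀ (norm_nonneg _) (norm_nonneg _)).1 ?_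
  rw [← expectation_one, ← expectation_one, expectation_mulVec, mul_one, h]

lemma haarState_eq_mulVec_single [Inhabited I] (U : unitaryGroup I ℂ) :
    haarState U = U.1 *ᵥ Pi.single default 1 := by
  rw [mulVec_single_one]
  rfl

lemma norm_toLp_haarState [Inhabited I] (U : unitaryGroup I ℂ) : ‖toLp 2 (haarState U)‖ = 1 := by
  rw [haarState_eq_mulVec_single, norm_toLp_mulVec_of_mem_unitaryGroup U.2, PiLp.toLp_single,
    PiLp.norm_single, norm_one]

lemma exists_haarState_eq [Inhabited I] (v : I → ℂ) (hv : ‖toLp 2 v‖ = 1) :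
    ∃ V : unitaryGroup I ℂ, haarState V = v := by
  obtain ⟨b, hb⟩ := Orthonormal.exists_orthonormalBasis_extension_of_card_eq
    (𝕜 := ℂ) (E := EuclideanSpace ℂ I) (ι := I) (by simp)
    (v := fun _ => toLp 2 v) (s := {default})
    ⟨fun _ => hv, fun i j hij => absurd (Subsingleton.elim i j) hij⟩
  refine ⟨⟨(EuclideanSpace.basisFun I ℂ).toBasis.toMatrix b,
    OrthonormalBasis.toMatrix_orthonormalBasis_mem_unitary _ _⟩, funext fun i => ?_⟩
  simp [haarState, Basis.toMatrix_apply, hb default rfl]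

lemma l2_opNorm_le_one_of_mem_unitaryGroup {U : Matrix I I ℂ} (hU : U ∈ unitaryGroup I ℂ) :
    ‖U‖ ≤ 1 := by
  cases isEmpty_or_nonempty I
  · rw [Subsingleton.elim U 0, norm_zero]
    exact zero_le_one
  · exact (CStarRing.norm_of_mem_unitary hU).le

instance instCompactSpaceUnitaryGroup : CompactSpace (unitaryGroup I ℂ) := by
  refine isCompact_iff_compactSpace.1 (isCompact_of_isClosed_isBounded ?_ ?_)
  · have : (unitaryGroup I ℂ : Set (Matrix I I ℂ)) = {U | U * star U = 1} :=
      Set.ext fun U => mem_unitaryGroup_iff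
    rw [this]
    exact isClosed_eq (by fun_prop) continuous_const
  · exact isBounded_iff_forall_norm_le.2 ⟨1, fun U => l2_opNorm_le_one_of_mem_unitaryGroup⟩

lemma measurePreserving_mulVec_of_mem_unitaryGroup {U : Matrix I I ℂ} (hU : U ∈ unitaryGroup I ℂ) :
    MeasurePreserving (fun v : I → ℂ => U *ᵥ v) := by
  set f : (I → ℂ) →ₗ[ℝ] (I → ℂ) := (toLin' U).restrictScalars ℝ
  have hdet : |LinearMap.det f| = 1 := by
    have hnorm : ‖U.det‖ = 1 := CStarRing.norm_of_mem_unitary (det_of_mem_unitary hU)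
    rw [LinearMap.det_restrictScalars, LinearMap.det_toLin', Algebra.norm_complex_apply,
      Complex.normSq_eq_norm_sq, hnorm, one_pow, abs_one]
  refine ⟨Continuous.measurable (by fun_prop), ?_⟩
  have hmap := Measure.map_linearMap_addHaar_eq_smul_addHaar (volume : Measure (I → ℂ))
    (f := f) (abs_ne_zero.1 (hdet.trans_ne one_ne_zero))
  rwa [abs_inv, hdet, inv_one, ENNReal.ofReal_one, one_smul] at hmap

lemma isMulRightInvariant_of_isHaarMeasure {G : Type*} [Group G] [TopologicalSpace G]
    [IsTopologicalGroup G] [CompactSpace G] [MeasurableSpace G] [BorelSpace G] (μ : Measure G)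
    [μ.IsHaarMeasure] [IsProbabilityMeasure μ] : μ.IsMulRightInvariant := by
  refine ⟨fun g => ?_⟩
  have hg : Measurable (· * g) := (continuous_mul_const g).measurable
  have : IsProbabilityMeasure (μ.map (· * g)) := Measure.isProbabilityMeasure_map hg.aemeasurable
  have : (μ.map (· * g)).IsHaarMeasure :=
    Measure.isHaarMeasure_of_isCompact_nonempty_interior _ Set.univ isCompact_univ
      (by simp) (by simp) (by simp)
  exact Measure.isHaarMeasure_eq_of_isProbabilityMeasure _ _

section HaarState

variable [Inhabited I] (μ : Measure (unitaryGroup I ℂ)) [μ.IsHaarMeasure] [IsProbabilityMeasure μ]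

lemma measure_mulVec_mem_eq_measure_haarState_mem {v : I → ℂ} (hv : ‖toLp 2 v‖ = 1)
    (S : Set (I → ℂ)) : μ {U | U.1 *ᵥ v ∈ S} = μ {U | haarState U ∈ S} := by
  have := isMulRightInvariant_of_isHaarMeasure μ
  obtain ⟨V, rfl⟩ := exists_haarState_eq v hv
  rw [← measure_preimage_mul_right μ V {U | haarState U ∈ S}]
  simp only [haarState_eq_mulVec_single, mulVec_mulVec]
  rfl

-- Fubini: rotating `v ~ ν` by an independent Haar unitary does not change its law, while for
-- fixed `v ≠ 0` the direction of `U v` is that of a Haar random state.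
lemma measure_cone_eq_measure_haarState_mem_mul {ν : Measure (I → ℂ)} [SFinite ν]
    (hν : ∀ U ∈ unitaryGroup I ℂ, MeasurePreserving (fun v => U *ᵥ v) ν ν) (hν0 : ν {0} = 0)
    {S : Set (I → ℂ)} (hS : MeasurableSet S)
    (hcone : ∀ r : ℝ, 0 < r → ∀ v, r • v ∈ S ↔ v ∈ S) :
    ν S = μ {U | haarState U ∈ S} * ν Set.univ := by
  have hdirection : ∀ v ≠ 0, μ {U | U.1 *ᵥ v ∈ S} = μ {U | haarState U ∈ S} := by
    intro v hv
    have hpos : 0 < ‖toLp 2 v‖ := norm_pos_iff.2 ((toLp_eq_zero 2).not.2 hv)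
    rw [← measure_mulVec_mem_eq_measure_haarState_mem μ (v := ‖toLp 2 v‖⁻¹ • v)
      (by rw [toLp_smul, norm_smul, norm_inv, norm_norm, inv_mul_cancel₀ hpos.ne'])]
    simp only [mulVec_smul, hcone _ (inv_pos.2 hpos)]
  have hjoint : Measurable fun x : unitaryGroup I ℂ × (I → ℂ) =>
      S.indicator (1 : (I → ℂ) → ℝ≥0∞) (x.1.1 *ᵥ x.2) :=
    (measurable_one.indicator hS).comp (Continuous.measurable (by fun_prop))
  calc ν S = ∫⁻ U, ∫⁻ v, S.indicator 1 (U.1 *ᵥ v) ∂ν ∂μ := by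
        simp_rw [fun U : unitaryGroup I ℂ =>
          (hν U.1 U.2).lintegral_comp (measurable_one.indicator hS), lintegral_indicator_one hS,
          lintegral_const, measure_univ, mul_one]
    _ = ∫⁻ v, ∫⁻ U, S.indicator 1 (U.1 *ᵥ v) ∂μ ∂ν := lintegral_lintegral_swap hjoint.aemeasurable
    _ = ∫⁻ v, μ {U | U.1 *ᵥ v ∈ S} ∂ν := by
        refine lintegral_congr fun v => ?_
        have hv : Continuous fun U : unitaryGroup I ℂ => U.1 *ᵥ v := by fun_prop
        exact lintegral_indicator_one (hv.measurable hS)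
    _ = ∫⁻ _, μ {U | haarState U ∈ S} ∂ν := by
        refine lintegral_congr_ae ?_
        filter_upwards [compl_mem_ae_iff.2 hν0] with v hv using hdirection v hv
    _ = μ {U | haarState U ∈ S} * ν Set.univ := lintegral_const _

end HaarState

section GaussianIntegral

lemma lintegral_exp_neg_sum_mul_norm_sq {ι : Type*} [Fintype ι] {a : ι → ℝ} (ha : ∀ i, 0 < a i) :
    ∫⁻ v : ι → ℂ, .ofReal (Real.exp (-∑ i, a i * ‖v i‖ ^ 2)) = .ofReal (∏ i, Real.pi / a i) := by
  have hcoord : ∀ i, ∫ z : ℂ, Real.exp (-a i * ‖z‖ ^ 2) = Real.pi / a i := fun i => by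
    simpa using GaussianFourier.integral_rexp_neg_mul_sq_norm (V := ℂ) (ha i)
  have hint : ∫ v : ι → ℂ, Real.exp (-∑ i, a i * ‖v i‖ ^ 2) = ∏ i, Real.pi / a i := by
    simp_rw [← hcoord]
    rw [← integral_fintype_prod_volume_eq_prod]
    simp only [← Real.exp_sum, ← Finset.sum_neg_distrib, neg_mul]
  have hpos : 0 < ∏ i, Real.pi / a i := Finset.prod_pos fun i _ => div_pos Real.pi_pos (ha i)
  have hintegrable : Integrable fun v : ι → ℂ => Real.exp (-∑ i, a i * ‖v i‖ ^ 2) :=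
    not_imp_comm.1 integral_undef (hint.trans_ne hpos.ne')
  rw [← hint, ofReal_integral_eq_lintegral_ofReal hintegrable (ae_of_all _ fun _ => by positivity)]

lemma lintegral_exp_neg_norm_sq {ι : Type*} [Fintype ι] :
    ∫⁻ v : ι → ℂ, .ofReal (Real.exp (-‖toLp 2 v‖ ^ 2)) = .ofReal (Real.pi ^ Fintype.card ι) := by
  have h := lintegral_exp_neg_sum_mul_norm_sq (ι := ι) (a := fun _ => 1) fun _ => one_pos
  simpa only [EuclideanSpace.norm_sq_eq, one_mul, div_one, Finset.prod_const, Finset.card_univ]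
    using h

lemma expectation_eigenvectorUnitary_mulVec {E : Matrix I I ℂ} (hE : E.IsHermitian) (v : I → ℂ) :
    expectation E (hE.eigenvectorUnitary.1 *ᵥ v) = ∑ i, hE.eigenvalues i * ‖v i‖ ^ 2 := by
  have hdiag := hE.conjStarAlgAut_star_eigenvectorUnitary
  rw [Unitary.conjStarAlgAut_star_apply] at hdiag
  rw [expectation_mulVec, ← star_eq_conjTranspose, ← expectation_diagonal]
  exact congrArg (expectation · v) hdiag

lemma lintegral_exp_expectation_sub {E : Matrix I I ℂ} (hE : E.IsHermitian) {s t : ℝ}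
    (hpos : ∀ i, 0 < s - t * hE.eigenvalues i) :
    ∫⁻ v : I → ℂ, .ofReal (Real.exp (t * expectation E v - s * ‖toLp 2 v‖ ^ 2)) =
      .ofReal (∏ i, Real.pi / (s - t * hE.eigenvalues i)) := by
  have hmeas : Measurable fun v : I → ℂ =>
      ENNReal.ofReal (Real.exp (t * expectation E v - s * ‖toLp 2 v‖ ^ 2)) := by
    have := continuous_expectation E
    exact ENNReal.measurable_ofReal.comp (Continuous.measurable (by fun_prop))
  rw [← lintegral_exp_neg_sum_mul_norm_sq hpos,
    ← (measurePreserving_mulVec_of_mem_unitaryGroup hE.eigenvectorUnitary.2).lintegral_comp hmeas]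
  refine lintegral_congr fun v => ?_
  rw [norm_toLp_mulVec_of_mem_unitaryGroup hE.eigenvectorUnitary.2,
    expectation_eigenvectorUnitary_mulVec, EuclideanSpace.norm_sq_eq]
  simp only [sub_mul, mul_assoc, Finset.sum_sub_distrib, ← Finset.mul_sum, neg_sub]

end GaussianIntegral

lemma measurePreserving_withDensity {α : Type*} [MeasurableSpace α] {μ : Measure α} {f : α → α}
    (hf : MeasurePreserving f μ μ) {w : α → ℝ≥0∞} (hw : Measurable w) (hwf : ∀ x, w (f x) = w x) :
    MeasurePreserving f (μ.withDensity w) (μ.withDensity w) := by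
  refine ⟨hf.measurable, Measure.ext fun S hS => ?_⟩
  rw [Measure.map_apply hf.measurable hS, withDensity_apply _ hS,
    withDensity_apply _ (hf.measurable hS), ← hf.setLIntegral_comp_preimage hS hw]
  simp only [hwf]

section Tail

variable [Inhabited I] (μ : Measure (unitaryGroup I ℂ)) [μ.IsHaarMeasure] [IsProbabilityMeasure μ]

lemma lintegral_cone_exp_neg_norm_sq {S : Set (I → ℂ)} (hS : MeasurableSet S)
    (hcone : ∀ r : ℝ, 0 < r → ∀ v, r • v ∈ S ↔ v ∈ S) :
    ∫⁻ v in S, .ofReal (Real.exp (-‖toLp 2 v‖ ^ 2)) =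
      μ {U | haarState U ∈ S} * .ofReal (Real.pi ^ Fintype.card I) := by
  set w : (I → ℂ) → ℝ≥0∞ := fun v => .ofReal (Real.exp (-‖toLp 2 v‖ ^ 2))
  have hw : Measurable w :=
    ENNReal.measurable_ofReal.comp (Continuous.measurable (by fun_prop))
  have hinv : ∀ U ∈ unitaryGroup I ℂ,
      MeasurePreserving (U *ᵥ ·) (volume.withDensity w) (volume.withDensity w) := fun U hU =>
    measurePreserving_withDensity (measurePreserving_mulVec_of_mem_unitaryGroup hU) hw fun v => by
      simp only [w, norm_toLp_mulVec_of_mem_unitaryGroup hU]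
  have hzero : volume.withDensity w {0} = 0 :=
    withDensity_absolutelyContinuous _ _ (measure_singleton 0)
  have h := measure_cone_eq_measure_haarState_mem_mul μ hinv hzero hS hcone
  rwa [withDensity_apply _ hS, withDensity_apply _ .univ, setLIntegral_univ,
    lintegral_exp_neg_norm_sq] at h

-- Chernoff: on the cone `q ‖v‖² ≤ ⟨E⟩`, the weight `exp (-‖v‖²)` only grows when multiplied by
-- `exp (t (⟨E⟩ - q ‖v‖²))`.
lemma measure_le_expectation_haarState_le_prod {E : Matrix I I ℂ} (hE : E.IsHermitian) {q t : ℝ}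
    (ht : 0 ≤ t) (hpos : ∀ i, 0 < 1 + t * q - t * hE.eigenvalues i) :
    μ {U | q ≤ expectation E (haarState U)} ≤
      .ofReal (∏ i, (1 + t * q - t * hE.eigenvalues i)⁻¹) := by
  set S : Set (I → ℂ) := {v | q * ‖toLp 2 v‖ ^ 2 ≤ expectation E v} with hSdef
  have hS : MeasurableSet S :=
    measurableSet_le (Continuous.measurable (by fun_prop)) (continuous_expectation E).measurable
  have hcone : ∀ r : ℝ, 0 < r → ∀ v, r • v ∈ S ↔ v ∈ S := fun r hr v => by
    have hr2 : 0 < r ^ 2 := by positivity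
    simp only [hSdef, Set.mem_ofPred_eq, toLp_smul, norm_smul, expectation_real_smul,
      Real.norm_of_nonneg hr.le, mul_pow, mul_left_comm q, mul_le_mul_iff_right₀ hr2]
  have hstate : {U : unitaryGroup I ℂ | q ≤ expectation E (haarState U)} = {U | haarState U ∈ S} :=
    by simp only [hSdef, Set.mem_ofPred_eq, norm_toLp_haarState, one_pow, mul_one]
  have hpi : 0 < Real.pi ^ Fintype.card I := by positivity
  have hscaled : μ {U | haarState U ∈ S} * .ofReal (Real.pi ^ Fintype.card I) ≤
      .ofReal (∏ i, (1 + t * q - t * hE.eigenvalues i)⁻¹) *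
        .ofReal (Real.pi ^ Fintype.card I) := by
    calc μ {U | haarState U ∈ S} * .ofReal (Real.pi ^ Fintype.card I)
      _ = ∫⁻ v in S, .ofReal (Real.exp (-‖toLp 2 v‖ ^ 2)) :=
        (lintegral_cone_exp_neg_norm_sq μ hS hcone).symm
      _ ≤ ∫⁻ v in S, .ofReal (Real.exp (t * expectation E v - (1 + t * q) * ‖toLp 2 v‖ ^ 2)) := by
        refine setLIntegral_mono' hS fun v hv => ENNReal.ofReal_le_ofReal (Real.exp_le_exp.2 ?_)
        linarith [mul_le_mul_of_nonneg_left hv.out ht]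
      _ ≤ ∫⁻ v, .ofReal (Real.exp (t * expectation E v - (1 + t * q) * ‖toLp 2 v‖ ^ 2)) :=
        setLIntegral_le_lintegral _ _
      _ = .ofReal (∏ i, Real.pi / (1 + t * q - t * hE.eigenvalues i)) :=
        lintegral_exp_expectation_sub hE hpos
      _ = _ := by
        rw [← ENNReal.ofReal_mul' hpi.le]
        simp only [div_eq_inv_mul, Finset.prod_mul_distrib, Finset.prod_const, Finset.card_univ]
  rw [hstate]
  exact (ENNReal.mul_le_mul_iff_left (ENNReal.ofReal_pos.2 hpi).ne' ENNReal.ofReal_ne_top).1 hscaled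

end Tail

/-- The relative entropy `D(p ‖ q)` of the Bernoulli distributions with parameters `p` and `q`, the
exponent in Chernoff's bound. It is meaningful for `p, q ∈ (0, 1)`. -/
def bernoulliKL (p q : ℝ) : ℝ :=
  p * Real.log (p / q) + (1 - p) * Real.log ((1 - p) / (1 - q))

lemma bernoulliKL_self (p : ℝ) : bernoulliKL p p = 0 := by
  simp [bernoulliKL]

lemma bernoulliKL_one_sub_one_sub (p q : ℝ) : bernoulliKL (1 - p) (1 - q) = bernoulliKL p q := by
  simp only [bernoulliKL, sub_sub_cancel, add_comm]

lemma hasDerivAt_bernoulliKL {p x : ℝ} (hp : p ∈ Set.Ioo 0 1) (hx : x ∈ Set.Ioo 0 1) :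
    HasDerivAt (bernoulliKL p) ((x - p) / (x * (1 - x))) x := by
  have hp0 : p ≠ 0 := hp.1.ne'
  have hp1 : 1 - p ≠ 0 := (sub_pos.2 hp.2).ne'
  have hx0 : x ≠ 0 := hx.1.ne'
  have hx1 : 1 - x ≠ 0 := (sub_pos.2 hx.2).ne'
  have h0 := (((hasDerivAt_const x p).div (hasDerivAt_id x) hx0).log
    (div_ne_zero hp0 hx0)).const_mul p
  have h1 := (((hasDerivAt_const x (1 - p)).div ((hasDerivAt_id x).const_sub 1) hx1).log
    (div_ne_zero hp1 hx1)).const_mul (1 - p)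
  convert! h0.add h1 using 1
  simp only [Pi.div_apply, id, zero_mul, zero_sub]
  field_simp
  ring

theorem two_mul_sq_sub_le_bernoulliKL {p q : ℝ} (hp : p ∈ Set.Ioo 0 1) (hq : q ∈ Set.Ioo 0 1) :
    2 * (q - p) ^ 2 ≤ bernoulliKL p q := by
  wlog hpq : p ≤ q
  · have h := this (p := 1 - p) (q := 1 - q) ⟨sub_pos.2 hp.2, by linarith [hp.1]⟩
      ⟨sub_pos.2 hq.2, by linarith [hq.1]⟩ (by linarith)
    rw [bernoulliKL_one_sub_one_sub] at h
    linarith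
  have hmem : ∀ x ∈ Set.Icc p q, x ∈ Set.Ioo (0 : ℝ) 1 := fun x hx =>
    ⟨hp.1.trans_le hx.1, hx.2.trans_lt hq.2⟩
  have hderiv : ∀ x ∈ Set.Icc p q, HasDerivAt (fun x => bernoulliKL p x - 2 * (x - p) ^ 2)
      ((x - p) / (x * (1 - x)) - 4 * (x - p)) x := by
    intro x hx
    convert! (hasDerivAt_bernoulliKL hp (hmem x hx)).sub
      ((((hasDerivAt_id x).sub_const p).pow 2).const_mul 2) using 1
    simp only [id]
    ring
  have hmono : MonotoneOn (fun x => bernoulliKL p x - 2 * (x - p) ^ 2) (Set.Icc p q) := by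
    refine monotoneOn_of_hasDerivWithinAt_nonneg (convex_Icc p q)
      (fun x hx => (hderiv x hx).continuousAt.continuousWithinAt)
      (fun x hx => (hderiv x (interior_subset hx)).hasDerivWithinAt) fun x hx => ?_
    obtain ⟨hpx, -⟩ := interior_subset hx
    obtain ⟨hx0, hx1⟩ := hmem x (interior_subset hx)
    have hx1' : 0 < 1 - x := sub_pos.2 hx1
    have hsplit : (x - p) / (x * (1 - x)) - 4 * (x - p) =
        (x - p) * (2 * x - 1) ^ 2 / (x * (1 - x)) := by
      field_simp
      ring
    rw [hsplit]
    exact div_nonneg (mul_nonneg (sub_nonneg.2 hpx) (sq_nonneg _)) (mul_pos hx0 hx1').le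
  have h := hmono (Set.left_mem_Icc.2 hpq) (Set.right_mem_Icc.2 hpq) hpq
  simp only [sub_self, bernoulliKL_self] at h
  linarith

section Projection

variable {E : Matrix I I ℂ}

lemma eigenvalues_eq_zero_or_one_of_isStarProjection (hE : IsStarProjection E) (i : I) :
    hE.isSelfAdjoint.isHermitian.eigenvalues i = 0 ∨
      hE.isSelfAdjoint.isHermitian.eigenvalues i = 1 :=
  hE.isIdempotentElem.spectrum_subset ℝ
    (hE.isSelfAdjoint.isHermitian.eigenvalues_mem_spectrum_real i)

lemma sum_comp_eigenvalues_of_isStarProjection (hE : IsStarProjection E) (f : ℝ → ℝ) :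
    ∑ i, f (hE.isSelfAdjoint.isHermitian.eigenvalues i) =
      E.trace.re * f 1 + (Fintype.card I - E.trace.re) * f 0 := by
  set l := hE.isSelfAdjoint.isHermitian.eigenvalues
  have htrace : E.trace.re = ∑ i, l i := by
    rw [hE.isSelfAdjoint.isHermitian.trace_eq_sum_eigenvalues, Complex.re_sum]
    rfl
  have hf : ∀ i, f (l i) = l i * f 1 + (1 - l i) * f 0 := fun i => by
    rcases eigenvalues_eq_zero_or_one_of_isStarProjection hE i with h | h <;> simp [l, h]
  simp only [hf, Finset.sum_add_distrib, ← Finset.sum_mul, Finset.sum_sub_distrib, htrace,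
    Finset.sum_const, Finset.card_univ, nsmul_eq_mul, mul_one]

end Projection

section ProjectionTail

variable [Inhabited I] (μ : Measure (unitaryGroup I ℂ)) [μ.IsHaarMeasure] [IsProbabilityMeasure μ]

-- `t = (q - p) / (q (1 - q))` minimizes the Chernoff bound; with it the two factors
-- `1 + t q` and `1 + t q - t` become `(1 - p) / (1 - q)` and `p / q`.
theorem measure_le_expectation_haarState_le_exp_neg_bernoulliKL {E : Matrix I I ℂ}
    (hE : IsStarProjection E) {p q : ℝ} (hp : 0 < p) (hpq : p ≤ q) (hq : q < 1)
    (htrace : E.trace.re = p * Fintype.card I) :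
    μ {U | q ≤ expectation E (haarState U)} ≤
      .ofReal (Real.exp (-(bernoulliKL p q * Fintype.card I))) := by
  have hE' : E.IsHermitian := hE.isSelfAdjoint.isHermitian
  have hq0 : 0 < q := hp.trans_le hpq
  have hq1 : 0 < 1 - q := sub_pos.2 hq
  have hp1 : 0 < 1 - p := by linarith
  set t : ℝ := (q - p) / (q * (1 - q)) with ht
  have ht0 : 0 ≤ t := div_nonneg (sub_nonneg.2 hpq) (by positivity)
  have hzero : 1 + t * q - t * 0 = (1 - p) / (1 - q) := by
    rw [ht]
    field_simp
    ring
  have hone : 1 + t * q - t * 1 = p / q := by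
    rw [ht]
    field_simp
    ring
  have hpos : ∀ i, 0 < 1 + t * q - t * hE'.eigenvalues i := fun i => by
    rcases eigenvalues_eq_zero_or_one_of_isStarProjection hE i with h | h
    · rw [h, hzero]
      positivity
    · rw [h, hone]
      positivity
  refine (measure_le_expectation_haarState_le_prod μ hE' ht0 hpos).trans_eq (congrArg _ ?_)
  calc ∏ i, (1 + t * q - t * hE'.eigenvalues i)⁻¹
    _ = Real.exp (-∑ i, Real.log (1 + t * q - t * hE'.eigenvalues i)) := by
      simp only [← Finset.sum_neg_distrib, Real.exp_sum, Real.exp_neg, Real.exp_log (hpos _)]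
    _ = Real.exp (-(bernoulliKL p q * Fintype.card I)) := by
      rw [sum_comp_eigenvalues_of_isStarProjection hE fun l => Real.log (1 + t * q - t * l), hone,
        hzero, htrace, bernoulliKL]
      ring_nf

theorem measure_le_expectation_haarState_le_exp {E : Matrix I I ℂ} (hE : IsStarProjection E)
    {p q : ℝ} (hp : 0 < p) (hpq : p ≤ q) (hq : q < 1) (htrace : E.trace.re = p * Fintype.card I) :
    μ {U | q ≤ expectation E (haarState U)} ≤
      .ofReal (Real.exp (-(2 * (q - p) ^ 2 * Fintype.card I))) := by
  refine (measure_le_expectation_haarState_le_exp_neg_bernoulliKL μ hE hp hpq hq htrace).trans ?_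
  gcongr
  exact two_mul_sq_sub_le_bernoulliKL ⟨hp, hpq.trans_lt hq⟩ ⟨hp.trans_le hpq, hq⟩

end ProjectionTail

section Nets

variable {E : Type*} [NormedAddCommGroup E] [NormedSpace ℝ E] [FiniteDimensional ℝ E]
  {r : ℝ} {ε : ℝ≥0}

-- The balls of radius `ε / 2` around the points are disjoint and contained in the ball of radius
-- `r + ε / 2`.
lemma card_le_of_isSeparated_of_subset_closedBall (hr : 0 ≤ r) (hε : 0 < ε) {s : Finset E}
    (hs : (s : Set E) ⊆ closedBall 0 r) (hsep : IsSeparated ε (s : Set E)) :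
    (s.card : ℝ) ≤ (1 + 2 * r / ε) ^ finrank ℝ E := by
  borelize E
  set ν : Measure E := .addHaar
  have hhalf : 0 ≤ (ε / 2 : ℝ) := by positivity
  have hbig : 0 ≤ r + ε / 2 := by positivity
  have hdisj : (s : Set E).PairwiseDisjoint fun x => closedBall x (ε / 2 : ℝ) := by
    intro x hx y hy hxy
    refine closedBall_disjoint_closedBall ?_
    have hlt : (ε : ℝ≥0∞) < edist x y := hsep hx hy hxy
    rw [edist_nndist, ENNReal.coe_lt_coe, ← NNReal.coe_lt_coe, coe_nndist] at hlt
    linarith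
  have hsub : ⋃ x ∈ s, closedBall x (ε / 2 : ℝ) ⊆ closedBall 0 (r + ε / 2) :=
    Set.iUnion₂_subset fun x hx =>
      closedBall_subset_closedBall' (by linarith [mem_closedBall.1 (hs hx)])
  have hvolume : (s.card * (ε / 2 : ℝ) ^ finrank ℝ E) * ν.real (ball 0 1) ≤
      (r + ε / 2) ^ finrank ℝ E * ν.real (ball 0 1) := by
    calc (s.card * (ε / 2 : ℝ) ^ finrank ℝ E) * ν.real (ball 0 1)
      _ = ∑ x ∈ s, ν.real (closedBall x (ε / 2 : ℝ)) := by
        simp only [ν.addHaar_real_closedBall _ hhalf, Finset.sum_const, nsmul_eq_mul, mul_assoc]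
      _ = ν.real (⋃ x ∈ s, closedBall x (ε / 2 : ℝ)) :=
        (measureReal_biUnion_finset hdisj (fun _ _ => measurableSet_closedBall)
          fun _ _ => measure_closedBall_lt_top.ne).symm
      _ ≤ ν.real (closedBall 0 (r + ε / 2)) := measureReal_mono hsub measure_closedBall_lt_top.ne
      _ = (r + ε / 2) ^ finrank ℝ E * ν.real (ball 0 1) := ν.addHaar_real_closedBall _ hbig
  have hunit : 0 < ν.real (ball 0 1) :=
    ENNReal.toReal_pos (measure_ball_pos ν 0 one_pos).ne' measure_ball_lt_top.ne
  have hratio : 1 + 2 * r / ε = (r + ε / 2) / (ε / 2) := by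
    field_simp
    ring
  rw [hratio, div_pow, le_div_iff₀ (by positivity)]
  exact le_of_mul_le_mul_right hvolume hunit

lemma packingNumber_le_of_subset_closedBall (hr : 0 ≤ r) (hε : 0 < ε) {S : Set E}
    (hS : S ⊆ closedBall 0 r) :
    packingNumber ε S ≤ ⌊(1 + 2 * r / ε) ^ finrank ℝ E⌋₊ := by
  refine iSup_le fun C => iSup_le fun hCS => iSup_le fun hC => ?_
  by_contra! hlt
  obtain ⟨T, hTC, hT⟩ := Set.exists_subset_encard_eq (Order.add_one_le_of_lt hlt)
  obtain ⟨s, rfl⟩ := (Set.finite_of_encard_eq_coe (k := _ + 1) hT).exists_finset_coe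
  rw [Set.encard_coe_eq_coe_finsetCard] at hT
  have hcard := Nat.le_floor <| card_le_of_isSeparated_of_subset_closedBall hr hε
    ((hTC.trans hCS).trans hS) (hC.subset hTC)
  have : s.card = ⌊(1 + 2 * r / ε) ^ finrank ℝ E⌋₊ + 1 := by exact_mod_cast hT
  omega

lemma exists_finset_isCover_of_subset_closedBall (hr : 0 ≤ r) (hε : 0 < ε) {S : Set E}
    (hS : S ⊆ closedBall 0 r) :
    ∃ N : Finset E, (N : Set E) ⊆ S ∧ IsCover ε S (N : Set E) ∧
      (N.card : ℝ) ≤ (1 + 2 * r / ε) ^ finrank ℝ E := by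
  have hle := (coveringNumber_le_packingNumber ε S).trans
    (packingNumber_le_of_subset_closedBall hr hε hS)
  obtain ⟨C, hCS, hfin, hcover, hcard⟩ :=
    exists_set_encard_eq_coveringNumber (hle.trans_lt (ENat.natCast_lt_top _)).ne
  obtain ⟨N, rfl⟩ := hfin.exists_finset_coe
  rw [← hcard, Set.encard_coe_eq_coe_finsetCard, Nat.cast_le] at hle
  exact ⟨N, hCS, hcover, Nat.floor_le (by positivity) |>.trans' (Nat.cast_le.2 hle)⟩

end Nets

lemma exists_finset_unitaryGroup_net {ε : ℝ} (hε : 0 < ε) (hε1 : ε ≤ 1) :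
    ∃ N : Finset (Matrix I I ℂ), (∀ M ∈ N, M ∈ unitaryGroup I ℂ) ∧
      (∀ U ∈ unitaryGroup I ℂ, ∃ M ∈ N, ‖U - M‖ ≤ ε) ∧
      (N.card : ℝ) ≤ (3 / ε) ^ (2 * Fintype.card I ^ 2) := by
  lift ε to ℝ≥0 using hε.le
  obtain ⟨N, hN, hcover, hcard⟩ := exists_finset_isCover_of_subset_closedBall zero_le_one
    (NNReal.coe_pos.1 hε) (S := (unitaryGroup I ℂ : Set (Matrix I I ℂ)))
    fun U hU => mem_closedBall_zero_iff.2 (l2_opNorm_le_one_of_mem_unitaryGroup hU)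
  have hfinrank : finrank ℝ (Matrix I I ℂ) = 2 * Fintype.card I ^ 2 := by
    rw [finrank_matrix, Complex.finrank_real_complex]
    ring
  refine ⟨N, fun M hM => hN hM, fun U hU => ?_, ?_⟩
  · obtain ⟨M, hM, hUM⟩ := Set.mem_iUnion₂.1 (isCover_iff_subset_iUnion_closedBall.1 hcover hU)
    exact ⟨M, hM, mem_closedBall_iff_norm.1 hUM⟩
  · rw [hfinrank] at hcard
    refine hcard.trans ?_
    gcongr
    rw [le_div_iff₀ hε, add_mul, div_mul_cancel₀ _ hε.ne']
    linarith

section StarProjection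

lemma isStarProjection_star_mul_mul {R : Type*} [Monoid R] [StarMul R] {u p : R}
    (hu : u * star u = 1) (hp : IsStarProjection p) : IsStarProjection (star u * p * u) where
  isIdempotentElem := by
    rw [IsIdempotentElem]
    calc star u * p * u * (star u * p * u) = star u * p * (u * star u) * (p * u) := by
          simp only [mul_assoc]
      _ = star u * (p * p) * u := by rw [hu, mul_one]; simp only [mul_assoc]
      _ = star u * p * u := by rw [hp.isIdempotentElem.eq]
  isSelfAdjoint := hp.isSelfAdjoint.conjugate' u

variable {K L R : Type*} [Fintype K] [Fintype L]

lemma trace_reindex_self [AddCommMonoid R] (e : K ≃ L) (P : Matrix K K R) :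
    (reindex e e P).trace = P.trace :=
  e.symm.sum_comp fun i => P i i

variable [CommSemiring R] [StarRing R]

lemma isStarProjection_reindex (e : K ≃ L) {P : Matrix K K R} (hP : IsStarProjection P) :
    IsStarProjection (reindex e e P) where
  isIdempotentElem := by
    rw [IsIdempotentElem, reindex_apply, submatrix_mul_equiv, hP.isIdempotentElem.eq]
  isSelfAdjoint := by
    rw [isSelfAdjoint_iff, star_eq_conjTranspose, conjTranspose_reindex,
      hP.isSelfAdjoint.isHermitian.eq]

lemma isStarProjection_kronecker {P : Matrix K K R} {Q : Matrix L L R} (hP : IsStarProjection P)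
    (hQ : IsStarProjection Q) : IsStarProjection (P ⊗ₖ Q) where
  isIdempotentElem := by
    rw [IsIdempotentElem, ← mul_kronecker_mul, hP.isIdempotentElem.eq, hQ.isIdempotentElem.eq]
  isSelfAdjoint := by
    rw [isSelfAdjoint_iff, star_eq_conjTranspose, conjTranspose_kronecker,
      hP.isSelfAdjoint.isHermitian.eq, hQ.isSelfAdjoint.isHermitian.eq]

end StarProjection

section Kronecker

variable {J : Type*} [Fintype J] [DecidableEq J]

/-- The ampliation `M ↦ M ⊗ 1`, as a homomorphism of star algebras. This structure is what makes it
contractive for the operator norm. -/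
def kroneckerOne : Matrix I I ℂ →⋆ₐ[ℂ] Matrix (I × J) (I × J) ℂ where
  toFun M := M ⊗ₖ 1
  map_one' := one_kronecker_one
  map_mul' M N := by rw [← mul_kronecker_mul, mul_one]
  map_zero' := zero_kronecker _
  map_add' M N := add_kronecker _ _ _
  commutes' z := by simp only [Algebra.algebraMap_eq_smul_one, smul_kronecker, one_kronecker_one]
  map_star' M := by
    simp only [star_eq_conjTranspose, conjTranspose_kronecker, conjTranspose_one]

/-- The ampliation `N ↦ 1 ⊗ N`, as a homomorphism of star algebras. -/
def oneKronecker : Matrix J J ℂ →⋆ₐ[ℂ] Matrix (I × J) (I × J) ℂ where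
  toFun N := 1 ⊗ₖ N
  map_one' := one_kronecker_one
  map_mul' M N := by rw [← mul_kronecker_mul, mul_one]
  map_zero' := kronecker_zero _
  map_add' M N := kronecker_add _ _ _
  commutes' z := by simp only [Algebra.algebraMap_eq_smul_one, kronecker_smul, one_kronecker_one]
  map_star' N := by
    simp only [star_eq_conjTranspose, conjTranspose_kronecker, conjTranspose_one]

lemma l2_opNorm_kronecker_le (M : Matrix I I ℂ) (N : Matrix J J ℂ) : ‖M ⊗ₖ N‖ ≤ ‖M‖ * ‖N‖ :=
  calc ‖M ⊗ₖ N‖ = ‖(kroneckerOne M : Matrix (I × J) (I × J) ℂ) * oneKronecker N‖ := by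
        refine congrArg _ ?_
        change M ⊗ₖ N = (M ⊗ₖ 1) * (1 ⊗ₖ N)
        rw [← mul_kronecker_mul, mul_one, one_mul]
    _ ≤ ‖kroneckerOne (J := J) M‖ * ‖oneKronecker (I := I) N‖ := norm_mul_le _ _
    _ ≤ ‖M‖ * ‖N‖ := by
        gcongr <;> exact NonUnitalStarAlgHom.norm_apply_le _ _

lemma l2_opNorm_kronecker_sub_kronecker_le (M M' : Matrix I I ℂ) (N N' : Matrix J J ℂ) :
    ‖M ⊗ₖ N - M' ⊗ₖ N'‖ ≤ ‖M - M'‖ * ‖N‖ + ‖M'‖ * ‖N - N'‖ := by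
  have hsplit : M ⊗ₖ N - M' ⊗ₖ N' = (M - M') ⊗ₖ N + M' ⊗ₖ (N - N') := by
    ext ⟨i, j⟩ ⟨i', j'⟩
    simp only [kronecker_apply, Matrix.sub_apply, Matrix.add_apply]
    ring
  rw [hsplit]
  exact (norm_add_le _ _).trans
    (add_le_add (l2_opNorm_kronecker_le _ _) (l2_opNorm_kronecker_le _ _))

end Kronecker

section Conjugation

variable {R : Type*} [NonUnitalNormedRing R] [StarRing R] [NormedStarGroup R]

lemma norm_star_mul_mul_sub_star_mul_mul_le (a b p : R) :
    ‖star a * p * a - star b * p * b‖ ≤ (‖a‖ + ‖b‖) * ‖p‖ * ‖a - b‖ := by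
  have hsplit : star a * p * a - star b * p * b =
      star a * p * (a - b) + star (a - b) * p * b := by
    rw [star_sub]
    noncomm_ring
  calc ‖star a * p * a - star b * p * b‖
    _ ≤ ‖star a * p * (a - b)‖ + ‖star (a - b) * p * b‖ := hsplit ▸ norm_add_le _ _
    _ ≤ ‖star a‖ * ‖p‖ * ‖a - b‖ + ‖star (a - b)‖ * ‖p‖ * ‖b‖ :=
      add_le_add (norm_mul₃_le ..) (norm_mul₃_le ..)
    _ = (‖a‖ + ‖b‖) * ‖p‖ * ‖a - b‖ := by
      rw [norm_star, norm_star]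
      ring

end Conjugation

section ReducedState

variable {A B C : Type*} [Fintype A] [Fintype B] [Fintype C]

lemma re_trace_rhoAB_mul (P : Matrix (A × B) (A × B) ℂ) (ψ : A × B × C → ℂ) :
    (trace (rhoAB ψ * P)).re = ∑ c, expectation P fun x => ψ (x.1, x.2, c) := by
  simp only [trace, diag_apply, mul_apply, rhoAB, of_apply, expectation, dotProduct, mulVec,
    Finset.sum_mul, Finset.mul_sum, ← Complex.re_sum]
  refine congrArg _ ?_
  rw [Finset.sum_comm, Finset.sum_congr rfl fun _ _ => Finset.sum_comm, Finset.sum_comm]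
  refine Finset.sum_congr rfl fun c _ => Finset.sum_congr rfl fun x _ => ?_
  refine Finset.sum_congr rfl fun y _ => ?_
  simp only [Pi.star_apply, RCLike.star_def]
  ring

lemma re_trace_rhoAB_mul_le [DecidableEq A] [DecidableEq B] (P : Matrix (A × B) (A × B) ℂ)
    (ψ : A × B × C → ℂ) :
    (trace (rhoAB ψ * P)).re ≤ ‖P‖ * ‖toLp 2 ψ‖ ^ 2 :=
  calc (trace (rhoAB ψ * P)).re
    _ = ∑ c, expectation P fun x => ψ (x.1, x.2, c) := re_trace_rhoAB_mul P ψ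
    _ ≤ ∑ c, ‖P‖ * ‖toLp 2 fun x : A × B => ψ (x.1, x.2, c)‖ ^ 2 :=
      Finset.sum_le_sum fun c _ => expectation_le_l2_opNorm P _
    _ = ‖P‖ * ‖toLp 2 ψ‖ ^ 2 := by
      simp only [← Finset.mul_sum, EuclideanSpace.norm_sq_eq, Fintype.sum_prod_type]
      rw [Finset.sum_comm, Finset.sum_congr rfl fun _ _ => Finset.sum_comm]

/-- The ampliation `P ⊗ 1_C` of an operator on `A ⊗ B`, reindexed so as to act on the right-nested
triple product `A × B × C` that indexes tripartite states. -/
def ampliation (C : Type*) [DecidableEq C] (P : Matrix (A × B) (A × B) ℂ) :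
    Matrix (A × B × C) (A × B × C) ℂ :=
  reindex (Equiv.prodAssoc A B C) (Equiv.prodAssoc A B C) (P ⊗ₖ (1 : Matrix C C ℂ))

variable [DecidableEq C]

lemma trace_ampliation (P : Matrix (A × B) (A × B) ℂ) :
    (ampliation C P).trace = P.trace * Fintype.card C := by
  rw [ampliation, trace_reindex_self, trace_kronecker, trace_one]

lemma isStarProjection_ampliation {P : Matrix (A × B) (A × B) ℂ} (hP : IsStarProjection P) :
    IsStarProjection (ampliation C P) :=
  isStarProjection_reindex _ (isStarProjection_kronecker hP (.one _))

lemma expectation_ampliation (P : Matrix (A × B) (A × B) ℂ) (ψ : A × B × C → ℂ) :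
    expectation (ampliation C P) ψ = (trace (rhoAB ψ * P)).re := by
  simp only [re_trace_rhoAB_mul, expectation, ← Complex.re_sum, ampliation, dotProduct, mulVec,
    reindex_apply, submatrix_apply, Equiv.prodAssoc_symm_apply, kronecker_apply, one_apply,
    Fintype.sum_prod_type, mul_ite, mul_one, mul_zero, ite_mul, zero_mul, Finset.sum_ite_eq,
    Finset.mem_univ, if_true, Pi.star_apply]
  exact congrArg _ ((Finset.sum_congr rfl fun _ _ => Finset.sum_comm).trans Finset.sum_comm)

end ReducedState

section MaximallyEntangled

variable {K : Type*} [Fintype K]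

/-- The orthogonal projection onto the maximally entangled vector `|K|^{-1/2} ∑ₖ eₖ ⊗ eₖ`. -/
def maxEntangledProj (K : Type*) [Fintype K] : Matrix (K × K) (K × K) ℂ :=
  of fun x y => if x.1 = x.2 ∧ y.1 = y.2 then (Fintype.card K : ℂ)⁻¹ else 0

lemma isStarProjection_maxEntangledProj [Nonempty K] : IsStarProjection (maxEntangledProj K) where
  isIdempotentElem := by
    ext x y
    by_cases hx : x.1 = x.2 <;> by_cases hy : y.1 = y.2 <;>
      simp [mul_apply, maxEntangledProj, Fintype.sum_prod_type, hx, hy]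
  isSelfAdjoint := by
    ext x y
    simp only [star_apply, maxEntangledProj, of_apply, and_comm, apply_ite star, star_inv₀,
      star_natCast, star_zero]

lemma trace_maxEntangledProj [Nonempty K] : (maxEntangledProj K).trace = 1 := by
  simp [trace, maxEntangledProj, Fintype.sum_prod_type]

end MaximallyEntangled

section EPR

lemma card_qubitIdx (n : ℕ) : Fintype.card (QubitIdx n) = 2 ^ n := by
  rw [Fintype.card_fun, Fintype.card_fin, Fintype.card_fin]

/-- Separates the first `m` qubits of either party from the remaining `a` and `b` ones. -/
def splitQubits (m a b : ℕ) : (QubitIdx m × QubitIdx m) × (QubitIdx a × QubitIdx b) ≃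
    QubitIdx (m + a) × QubitIdx (m + b) :=
  (Equiv.prodProdProdComm _ _ _ _).trans ((Fin.appendEquiv m a).prodCongr (Fin.appendEquiv m b))

variable {m a b : ℕ}

lemma splitQubits_apply (x y : QubitIdx m) (u : QubitIdx a) (w : QubitIdx b) :
    splitQubits m a b ((x, y), (u, w)) = (Fin.append x u, Fin.append y w) := rfl

lemma forall_lt_append_eq_append_iff {α : Type*} (x y : Fin m → α) (u : Fin a → α)
    (w : Fin b → α) :
    (∀ (k : ℕ) (hA : k < m + a) (hB : k < m + b), k < m →
      Fin.append x u ⟨k, hA⟩ = Fin.append y w ⟨k, hB⟩) ↔ x = y := by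
  refine ⟨fun h => funext fun k => ?_, ?_⟩
  · calc x k = Fin.append x u (k.castAdd a) := (Fin.append_left x u k).symm
      _ = Fin.append y w (k.castAdd b) := h k (k.castAdd a).2 (k.castAdd b).2 k.2
      _ = y k := Fin.append_left y w k
  · rintro rfl k _ _ hk
    exact (Fin.append_left x u ⟨k, hk⟩).trans (Fin.append_left x w ⟨k, hk⟩).symm

lemma forall_ge_append_eq_append_iff {α : Type*} (x y : Fin m → α) (u w : Fin a → α) :
    (∀ k : Fin (m + a), m ≤ k → Fin.append x u k = Fin.append y w k) ↔ u = w := by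
  simp [Fin.forall_fin_add, funext_iff]

lemma eprProj_eq_reindex : eprProj (m + a) (m + b) m =
    reindex (splitQubits m a b) (splitQubits m a b) (maxEntangledProj (QubitIdx m) ⊗ₖ 1) := by
  rw [← Equiv.symm_apply_eq]
  ext ⟨⟨x, y⟩, u, w⟩ ⟨⟨x', y'⟩, u', w'⟩
  simp only [reindex_symm, reindex_apply, Equiv.symm_symm, submatrix_apply, eprProj, of_apply,
    splitQubits_apply, imp_and, forall_and, forall_lt_append_eq_append_iff,
    forall_ge_append_eq_append_iff, kronecker_apply, one_apply, maxEntangledProj, Prod.mk.injEq,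
    ite_zero_mul_ite_zero, mul_one, and_assoc, card_qubitIdx, Nat.cast_pow,
    Nat.cast_ofNat]

lemma isStarProjection_eprProj {nA nB m : ℕ} (hA : m ≤ nA) (hB : m ≤ nB) :
    IsStarProjection (eprProj nA nB m) := by
  obtain ⟨a, rfl⟩ := Nat.exists_eq_add_of_le hA
  obtain ⟨b, rfl⟩ := Nat.exists_eq_add_of_le hB
  rw [eprProj_eq_reindex]
  exact isStarProjection_reindex _
    (isStarProjection_kronecker isStarProjection_maxEntangledProj (.one _))

lemma trace_eprProj {nA nB m : ℕ} (hA : m ≤ nA) (hB : m ≤ nB) :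
    (eprProj nA nB m).trace =
      (((2 ^ (2 * m))⁻¹ * Fintype.card (QubitIdx nA × QubitIdx nB) : ℝ) : ℂ) := by
  obtain ⟨a, rfl⟩ := Nat.exists_eq_add_of_le hA
  obtain ⟨b, rfl⟩ := Nat.exists_eq_add_of_le hB
  rw [eprProj_eq_reindex, trace_reindex_self, trace_kronecker, trace_maxEntangledProj, one_mul,
    trace_one]
  simp only [Fintype.card_prod, card_qubitIdx]
  push_cast
  field_simp
  ring

end EPR

lemma pow_mul_exp_le_exp {c δ η D : ℝ} (hδ : 0 < δ) (hδ1 : δ ≤ 1) (hη : 0 < η) (hη1 : η ≤ 12)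
    (hc : c ≤ 2 * (1 - η) ^ 2) (hD : 0 ≤ D) (n : ℕ) :
    (12 / η * (1 / δ)) ^ (2 * n) * Real.exp (-(2 * ((1 - η) * δ) ^ 2 * D)) ≤
      Real.exp (-(c * δ ^ 2 * D) + 2 * (Real.log (12 / η) + 1) * n * (1 + Real.log (1 / δ))) := by
  have hη_log : 0 ≤ Real.log (12 / η) := Real.log_nonneg ((one_le_div hη).2 hη1)
  have hδ_log : 0 ≤ Real.log (1 / δ) := Real.log_nonneg ((one_le_div hδ).2 hδ1)
  have hlog : Real.log (12 / η) + Real.log (1 / δ) ≤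
      (Real.log (12 / η) + 1) * (1 + Real.log (1 / δ)) := by
    nlinarith [mul_nonneg hη_log hδ_log]
  have hrate : c * δ ^ 2 * D ≤ 2 * ((1 - η) * δ) ^ 2 * D := by
    rw [mul_pow, ← mul_assoc 2]
    gcongr
  calc (12 / η * (1 / δ)) ^ (2 * n) * Real.exp (-(2 * ((1 - η) * δ) ^ 2 * D))
    _ = Real.exp (2 * n * (Real.log (12 / η) + Real.log (1 / δ)) +
          -(2 * ((1 - η) * δ) ^ 2 * D)) := by
      rw [← Real.log_mul (by positivity) (by positivity), Real.exp_add,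
        ← Real.exp_log (x := (12 / η * (1 / δ)) ^ (2 * n)) (by positivity), Real.log_pow]
      push_cast
      rfl
    _ ≤ Real.exp (2 * n * ((Real.log (12 / η) + 1) * (1 + Real.log (1 / δ))) +
          -(c * δ ^ 2 * D)) := by
      gcongr
    _ = _ := by
      congr 1
      ring

section LocalUnitaries

variable {A B C : Type*} [Fintype A] [Fintype B] [Fintype C]

lemma trace_mul_mul_conjTranspose_mul {K R : Type*} [Fintype K]
    [NonUnitalCommSemiring R] [StarRing R] (W ρ P : Matrix K K R) :
    trace (W * ρ * Wᴴ * P) = trace (ρ * (Wᴴ * P * W)) := by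
  rw [mul_assoc, mul_assoc, trace_mul_comm, mul_assoc]

variable [DecidableEq A] [DecidableEq B]

lemma re_trace_conj_rhoAB_le {W P : Matrix (A × B) (A × B) ℂ} (hW : W ∈ unitaryGroup (A × B) ℂ)
    (ψ : A × B × C → ℂ) :
    (trace (W * rhoAB ψ * Wᴴ * P)).re ≤ ‖P‖ * ‖toLp 2 ψ‖ ^ 2 := by
  rw [trace_mul_mul_conjTranspose_mul]
  refine (re_trace_rhoAB_mul_le _ _).trans ?_
  gcongr
  calc ‖Wᴴ * P * W‖ ≤ ‖Wᴴ‖ * ‖P‖ * ‖W‖ := norm_mul₃_le ..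
    _ ≤ 1 * ‖P‖ * 1 := by
      gcongr
      · exact (norm_star W).trans_le (l2_opNorm_le_one_of_mem_unitaryGroup hW)
      · exact l2_opNorm_le_one_of_mem_unitaryGroup hW
    _ = ‖P‖ := by rw [one_mul, mul_one]

lemma re_trace_conj_rhoAB_le_add {W V : Matrix (A × B) (A × B) ℂ}
    (hW : W ∈ unitaryGroup (A × B) ℂ) (hV : V ∈ unitaryGroup (A × B) ℂ)
    (P : Matrix (A × B) (A × B) ℂ) (ψ : A × B × C → ℂ) :
    (trace (W * rhoAB ψ * Wᴴ * P)).re ≤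
      (trace (V * rhoAB ψ * Vᴴ * P)).re + 2 * ‖P‖ * ‖W - V‖ * ‖toLp 2 ψ‖ ^ 2 := by
  simp only [trace_mul_mul_conjTranspose_mul]
  rw [← sub_le_iff_le_add', ← Complex.sub_re, ← trace_sub, ← mul_sub]
  refine (re_trace_rhoAB_mul_le _ _).trans ?_
  gcongr
  calc ‖Wᴴ * P * W - Vᴴ * P * V‖
    _ ≤ (‖W‖ + ‖V‖) * ‖P‖ * ‖W - V‖ := norm_star_mul_mul_sub_star_mul_mul_le W V P
    _ ≤ (1 + 1) * ‖P‖ * ‖W - V‖ := by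
      gcongr
      · exact l2_opNorm_le_one_of_mem_unitaryGroup hW
      · exact l2_opNorm_le_one_of_mem_unitaryGroup hV
    _ = 2 * ‖P‖ * ‖W - V‖ := by rw [one_add_one_eq_two]

lemma l2_opNorm_kronecker_sub_kronecker_le_of_mem_unitaryGroup {UA MA : Matrix A A ℂ}
    {UB MB : Matrix B B ℂ} (hMA : MA ∈ unitaryGroup A ℂ) (hUB : UB ∈ unitaryGroup B ℂ) :
    ‖UA ⊗ₖ UB - MA ⊗ₖ MB‖ ≤ ‖UA - MA‖ + ‖UB - MB‖ := by
  refine (l2_opNorm_kronecker_sub_kronecker_le UA MA UB MB).trans (add_le_add ?_ ?_)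
  · exact mul_le_of_le_one_right (norm_nonneg _) (l2_opNorm_le_one_of_mem_unitaryGroup hUB)
  · exact mul_le_of_le_one_left (norm_nonneg _) (l2_opNorm_le_one_of_mem_unitaryGroup hMA)

lemma exists_finset_local_unitary_net {ε : ℝ} (hε : 0 < ε) (hε2 : ε ≤ 2) :
    ∃ N : Finset (Matrix (A × B) (A × B) ℂ), (∀ M ∈ N, M ∈ unitaryGroup (A × B) ℂ) ∧
      (∀ (UA : unitaryGroup A ℂ) (UB : unitaryGroup B ℂ), ∃ M ∈ N, ‖UA.1 ⊗ₖ UB.1 - M‖ ≤ ε) ∧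
      (N.card : ℝ) ≤ (6 / ε) ^ (2 * (Fintype.card A ^ 2 + Fintype.card B ^ 2)) := by
  obtain ⟨NA, hNA, hcoverA, hcardA⟩ := exists_finset_unitaryGroup_net (I := A) (half_pos hε)
    (by linarith)
  obtain ⟨NB, hNB, hcoverB, hcardB⟩ := exists_finset_unitaryGroup_net (I := B) (half_pos hε)
    (by linarith)
  refine ⟨(NA ×ˢ NB).image fun M => M.1 ⊗ₖ M.2, fun M hM => ?_, fun UA UB => ?_, ?_⟩
  · obtain ⟨⟨MA, MB⟩, hmem, rfl⟩ := Finset.mem_image.1 hM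
    rw [Finset.mem_product] at hmem
    exact kronecker_mem_unitary (hNA MA hmem.1) (hNB MB hmem.2)
  · obtain ⟨MA, hMA, hA⟩ := hcoverA UA UA.2
    obtain ⟨MB, hMB, hB⟩ := hcoverB UB UB.2
    refine ⟨_, Finset.mem_image_of_mem _ (Finset.mk_mem_product hMA hMB), ?_⟩
    have := l2_opNorm_kronecker_sub_kronecker_le_of_mem_unitaryGroup (UA := UA.1) (MB := MB)
      (hNA MA hMA) UB.2
    dsimp only
    linarith
  · have hmesh : 3 / (ε / 2) = 6 / ε := by
      field_simp
      norm_num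
    rw [hmesh] at hcardA hcardB
    calc (((NA ×ˢ NB).image fun M => M.1 ⊗ₖ M.2).card : ℝ)
      _ ≤ NA.card * NB.card := by
        exact_mod_cast Finset.card_image_le.trans_eq (Finset.card_product NA NB)
      _ ≤ (6 / ε) ^ (2 * Fintype.card A ^ 2) * (6 / ε) ^ (2 * Fintype.card B ^ 2) := by gcongr
      _ = (6 / ε) ^ (2 * (Fintype.card A ^ 2 + Fintype.card B ^ 2)) := by ring

variable [DecidableEq C] [Inhabited A] [Inhabited B] [Inhabited C]
  (μ : Measure (unitaryGroup (A × B × C) ℂ)) [μ.IsHaarMeasure] [IsProbabilityMeasure μ]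

theorem measure_le_re_trace_conj_rhoAB_le_exp {W P : Matrix (A × B) (A × B) ℂ}
    (hW : W ∈ unitaryGroup (A × B) ℂ) (hP : IsStarProjection P) {p q : ℝ} (hp : 0 < p)
    (hpq : p ≤ q) (hq : q < 1) (htrace : P.trace.re = p * Fintype.card (A × B)) :
    μ {U | q ≤ (trace (W * rhoAB (haarState U) * Wᴴ * P)).re} ≤
      .ofReal (Real.exp (-(2 * (q - p) ^ 2 * Fintype.card (A × B × C)))) := by
  simp only [trace_mul_mul_conjTranspose_mul, ← expectation_ampliation]
  have hWW : W * Wᴴ = 1 := mem_unitaryGroup_iff.1 hW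
  refine measure_le_expectation_haarState_le_exp μ
    (isStarProjection_ampliation (isStarProjection_star_mul_mul hWW hP)) hp hpq hq ?_
  rw [trace_ampliation, star_eq_conjTranspose, trace_mul_comm, ← mul_assoc, hWW, one_mul,
    ← Complex.ofReal_natCast, Complex.re_mul_ofReal, htrace]
  simp only [Fintype.card_prod, Nat.cast_mul]
  ring

theorem measure_exists_le_re_trace_conj_rhoAB_le_card_mul_exp
    {𝒲 : Set (Matrix (A × B) (A × B) ℂ)} (h𝒲 : ∀ W ∈ 𝒲, W ∈ unitaryGroup (A × B) ℂ)
    {N : Finset (Matrix (A × B) (A × B) ℂ)} (hN : ∀ M ∈ N, M ∈ unitaryGroup (A × B) ℂ) {r : ℝ}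
    (hcover : ∀ W ∈ 𝒲, ∃ M ∈ N, ‖W - M‖ ≤ r) {P : Matrix (A × B) (A × B) ℂ}
    (hP : IsStarProjection P) {p q : ℝ} (hp : 0 < p) (hpq : p ≤ q) (hq : q < 1)
    (htrace : P.trace.re = p * Fintype.card (A × B)) :
    μ {U | ∃ W ∈ 𝒲, q + 2 * r ≤ (trace (W * rhoAB (haarState U) * Wᴴ * P)).re} ≤
      .ofReal (N.card * Real.exp (-(2 * (q - p) ^ 2 * Fintype.card (A × B × C)))) := by
  let S (W : Matrix (A × B) (A × B) ℂ) : Set (unitaryGroup (A × B × C) ℂ) :=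
    {U | q ≤ (trace (W * rhoAB (haarState U) * Wᴴ * P)).re}
  have hsubset : {U | ∃ W ∈ 𝒲, q + 2 * r ≤ (trace (W * rhoAB (haarState U) * Wᴴ * P)).re} ⊆
      ⋃ M ∈ N, S M := by
    rintro U ⟨W, hW, hU⟩
    obtain ⟨M, hM, hWM⟩ := hcover W hW
    refine Set.mem_iUnion₂.2 ⟨M, hM, ?_⟩
    have hlip := re_trace_conj_rhoAB_le_add (h𝒲 W hW) (hN M hM) P (haarState U)
    have hnorm : ‖P‖ * ‖W - M‖ ≤ r :=
      (mul_le_of_le_one_left (norm_nonneg _) hP.norm_le).trans hWM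
    rw [norm_toLp_haarState, one_pow, mul_one] at hlip
    change q ≤ _
    linarith
  calc μ {U | ∃ W ∈ 𝒲, q + 2 * r ≤ (trace (W * rhoAB (haarState U) * Wᴴ * P)).re}
    _ ≤ ∑ M ∈ N, μ (S M) := (measure_mono hsubset).trans (measure_biUnion_finset_le _ _)
    _ ≤ ∑ _M ∈ N, ENNReal.ofReal (Real.exp (-(2 * (q - p) ^ 2 * Fintype.card (A × B × C)))) :=
      Finset.sum_le_sum fun M hM =>
        measure_le_re_trace_conj_rhoAB_le_exp μ (hN M hM) hP hp hpq hq htrace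
    _ = .ofReal (N.card * Real.exp (-(2 * (q - p) ^ 2 * Fintype.card (A × B × C)))) := by
      rw [Finset.sum_const, nsmul_eq_mul, ENNReal.ofReal_mul (Nat.cast_nonneg _),
        ENNReal.ofReal_natCast]

-- The net has mesh `η δ / 2`, so that passing to it costs at most the fraction `η` of the
-- deviation `δ`.
theorem measure_exists_le_re_trace_kronecker_conj_rhoAB_le_pow_mul_exp
    {P : Matrix (A × B) (A × B) ℂ} (hP : IsStarProjection P) {p δ η : ℝ}
    (hp : 0 < p) (hδ : 0 < δ) (hpδ : p + δ ≤ 1) (hη : 0 < η) (hη1 : η < 1)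
    (htrace : P.trace.re = p * Fintype.card (A × B)) :
    μ {U | ∃ UA : unitaryGroup A ℂ, ∃ UB : unitaryGroup B ℂ, p + δ ≤
        (trace ((UA.1 ⊗ₖ UB.1) * rhoAB (haarState U) * (UA.1 ⊗ₖ UB.1)ᴴ * P)).re} ≤
      .ofReal ((12 / η * (1 / δ)) ^ (2 * (Fintype.card A ^ 2 + Fintype.card B ^ 2)) *
        Real.exp (-(2 * ((1 - η) * δ) ^ 2 * Fintype.card (A × B × C)))) := by
  have hηδ : 0 < η * δ := mul_pos hη hδ
  have hηδ_lt : η * δ < δ := mul_lt_of_lt_one_left hδ hη1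
  obtain ⟨N, hN, hcover, hcard⟩ := exists_finset_local_unitary_net (A := A) (B := B)
    (ε := η * δ / 2) (by positivity) (by linarith)
  have hbound := measure_exists_le_re_trace_conj_rhoAB_le_card_mul_exp μ
    (𝒲 := {W | ∃ UA : unitaryGroup A ℂ, ∃ UB : unitaryGroup B ℂ, UA.1 ⊗ₖ UB.1 = W})
    (by rintro _ ⟨UA, UB, rfl⟩; exact kronecker_mem_unitary UA.2 UB.2) hN
    (by rintro _ ⟨UA, UB, rfl⟩; exact hcover UA UB) hP hp
    (q := p + (1 - η) * δ) (by linarith) (by linarith) htrace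
  refine (measure_mono ?_).trans (hbound.trans ?_)
  · rintro U ⟨UA, UB, hU⟩
    exact ⟨_, ⟨UA, UB, rfl⟩, hU.trans' (by linarith)⟩
  · rw [add_sub_cancel_left]
    gcongr
    refine hcard.trans_eq (congrArg (· ^ _) ?_)
    field_simp
    norm_num

-- The mesh fraction is `η = (2 - c) / 4`, for which `2 (1 - η)² = (2 + c)² / 8 ≥ c`.
theorem lu_distillation_no_go_general {P : Matrix (A × B) (A × B) ℂ} (hP : IsStarProjection P)
    {p q : ℝ} (hp : 0 < p) (hpq : p < q)
    (htrace : P.trace.re = p * Fintype.card (A × B)) {c : ℝ} (hc0 : 0 < c) (hc2 : c < 2) :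
    μ {U | ∃ UA : unitaryGroup A ℂ, ∃ UB : unitaryGroup B ℂ, q ≤
        (trace ((UA.1 ⊗ₖ UB.1) * rhoAB (haarState U) * (UA.1 ⊗ₖ UB.1)ᴴ * P)).re} ≤
      .ofReal (Real.exp (-(c * (q - p) ^ 2 * Fintype.card (A × B × C)) +
        2 * (Real.log (48 / (2 - c)) + 1) * (Fintype.card A ^ 2 + Fintype.card B ^ 2) *
          (1 + Real.log (1 / (q - p))))) := by
  have hη : 12 / ((2 - c) / 4) = 48 / (2 - c) := by
    rw [div_div_eq_mul_div]
    norm_num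
  rcases le_or_gt q 1 with hq | hq
  · have hbound := measure_exists_le_re_trace_kronecker_conj_rhoAB_le_pow_mul_exp μ hP hp
      (sub_pos.2 hpq) (η := (2 - c) / 4) (by linarith) (by linarith) (by linarith) htrace
    rw [add_sub_cancel] at hbound
    refine hbound.trans (ENNReal.ofReal_le_ofReal ?_)
    have := pow_mul_exp_le_exp (c := c) (D := Fintype.card (A × B × C)) (sub_pos.2 hpq)
      (by linarith) (η := (2 - c) / 4) (by linarith) (by linarith)
      (by nlinarith [sq_nonneg (2 - c)]) (Nat.cast_nonneg _)
      (Fintype.card A ^ 2 + Fintype.card B ^ 2)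
    rw [hη] at this ⊢
    exact_mod_cast this
  · refine (measure_mono_null ?_ measure_empty).trans_le zero_le
    rintro U ⟨UA, UB, hU⟩
    have := re_trace_conj_rhoAB_le (P := P) (kronecker_mem_unitary UA.2 UB.2) (haarState U)
    rw [norm_toLp_haarState, one_pow, mul_one] at this
    linarith [hP.norm_le]

end LocalUnitaries

/-- **Theorem 3** (LU-distillation no-go).  For every `0 < c < 2` there is a
constant `C > 0` such that for all qubit numbers `n_A, n_B, n_C ≥ 1`, all
`1 ≤ m ≤ min(n_A, n_B)` and all `h` with `δ := h² - 2^{-2m} > 0`, the Haar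
probability that `m` EPR pairs are LU-distillable at fidelity `h` from the
reduced state `ρ_AB` of the Haar random state `U e₁` satisfies
`log Prob ≤ -c δ² d + C (d_A² + d_B²)(1 + log (1/δ))`, i.e.
`Prob ≤ exp(-c δ² d + C (d_A² + d_B²)(1 + log (1/δ)))`. -/
theorem lu_distillation_no_go (c : ℝ) (hc0 : 0 < c) (hc2 : c < 2) :
    ∃ C : ℝ, 0 < C ∧
      ∀ (nA nB nC : ℕ), 0 < nA → 0 < nB → 0 < nC →
      ∀ m : ℕ, 1 ≤ m → m ≤ nA → m ≤ nB →
      ∀ h : ℝ, 0 < h ^ 2 - ((2 : ℝ) ^ (2 * m))⁻¹ →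
      ∀ μ : Measure (Matrix.unitaryGroup (QubitIdx nA × QubitIdx nB × QubitIdx nC) ℂ),
        μ.IsHaarMeasure → IsProbabilityMeasure μ →
        μ {U | ∃ UA : Matrix.unitaryGroup (QubitIdx nA) ℂ,
               ∃ UB : Matrix.unitaryGroup (QubitIdx nB) ℂ,
               h ^ 2 ≤ (Matrix.trace ((UA.1 ⊗ₖ UB.1) * rhoAB (haarState U) *
                          (UA.1 ⊗ₖ UB.1)ᴴ * eprProj nA nB m)).re}
          ≤ ENNReal.ofReal (Real.exp
              (-(c * (h ^ 2 - ((2 : ℝ) ^ (2 * m))⁻¹) ^ 2 * 2 ^ (nA + nB + nC))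
                + C * (((2 : ℝ) ^ nA) ^ 2 + ((2 : ℝ) ^ nB) ^ 2) *
                  (1 + Real.log (1 / (h ^ 2 - ((2 : ℝ) ^ (2 * m))⁻¹))))) := by
  refine ⟨2 * (Real.log (48 / (2 - c)) + 1), ?_, ?_⟩
  · have : 0 < Real.log (48 / (2 - c)) := Real.log_pos <| (one_lt_div (by linarith)).2 (by linarith)
    positivity
  intro nA nB nC _ _ _ m _ hmA hmB h hδ μ _ _
  have hbound := lu_distillation_no_go_general μ
    (isStarProjection_eprProj hmA hmB) (by positivity) (sub_pos.1 hδ)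
    (by rw [trace_eprProj hmA hmB, Complex.ofReal_re]) hc0 hc2
  simpa only [Fintype.card_prod, card_qubitIdx, Nat.cast_mul, Nat.cast_pow, Nat.cast_ofNat,
    pow_add, mul_assoc] using hbound
end
end

section
/- Let d_A, d_B be positive integers, let μ be the Haar probability measure on the unitary group U(d_A·d_B), and for U ∈ U(d_A·d_B) let ρ_A(U) be the reduced density matrix on ℂ^{d_A} of the unit vector U e₁ ∈ ℂ^{d_A}⊗ℂ^{d_B}. Then the Haar-expected trace-norm distance of ρ_A from the maximally mixed state satisfies ∫ ‖ρ_A(U) − (1/d_A)I_{d_A}‖₁ dμ(U) ≤ √(d_A/d_B). -/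
/-!
The Page–Lubkin–Lloyd bound (Eq. (6) of the paper): for a Haar random bipartite
pure state `ψ = U e₁` on `ℂ^{d_A} ⊗ ℂ^{d_B}`, the Haar-expected trace-norm
distance of the reduced state `ρ_A` from the maximally mixed state satisfies
`E ‖ρ_A - I/d_A‖₁ ≤ √(d_A/d_B)`.
-/

open MeasureTheory Matrix
open scoped Classical

noncomputable section

/-- The trace norm of a Hermitian matrix: the sum of the absolute values of its
eigenvalues. -/
def traceNorm {n : Type*} [Fintype n] [DecidableEq n] (M : Matrix n n ℂ) : ℝ :=
  if hM : M.IsHermitian then ∑ i, |hM.eigenvalues i| else 0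

/-- Reduced density matrix on the first tensor factor of a bipartite vector:
`ρ_A[a,a'] = ∑_b ψ(a,b) conj (ψ(a',b))`. -/
def rhoA {IA IB : Type*} [Fintype IB] (ψ : IA × IB → ℂ) : Matrix IA IA ℂ :=
  Matrix.of fun a a' => ∑ b : IB, ψ (a, b) * (starRingEnd ℂ) (ψ (a', b))

/-!
Write `ψ = U v` and `N = d_A d_B`. Left invariance makes the law of `⟨u, ψ⟩` the same for every
unit vector `u`. Averaging `|ψ_p + c ψ_q|⁴` over `c ∈ {1, -1, i, -i}` therefore gives
`E |ψ_p|²|ψ_q|² = E |ψ_p|⁴ / 2` for `p ≠ q`, and `‖ψ‖ = 1` turns this into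
`E |ψ_p|²|ψ_q|² = (1 + δ_pq) / (N (N + 1))`. The other fourth moments in `Tr ρ_A²` vanish because
they are odd in some coordinate, so `E Tr ρ_A² = (d_A + d_B) / (N + 1)`. Cauchy–Schwarz on the
eigenvalues bounds `‖ρ_A - I/d_A‖₁` by `√(d_A Tr ρ_A² - 1)`, and Jensen's inequality concludes.
-/

section TraceNorm

variable {n : Type*} [Fintype n] [DecidableEq n]

lemma trace_mul_self_eq_sum_sq_eigenvalues {𝕜 : Type*} [RCLike 𝕜] {M : Matrix n n 𝕜}
    (hM : M.IsHermitian) : (M * M).trace = ∑ i, (hM.eigenvalues i : 𝕜) ^ 2 := by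
  conv_lhs => rw [hM.spectral_theorem]
  rw [← map_mul, Unitary.conjStarAlgAut_apply, trace_mul_comm, ← mul_assoc]
  simp [trace, sq]

lemma traceNorm_eq_re_trace_cfc_abs {M : Matrix n n ℂ} (hM : M.IsHermitian) :
    traceNorm M = (cfc (fun x : ℝ ↦ |x|) M).trace.re := by
  rw [traceNorm, dif_pos hM, hM.cfc_eq, IsHermitian.cfc, Unitary.conjStarAlgAut_apply,
    trace_mul_comm, ← mul_assoc]
  simp [trace]

open scoped Matrix.Norms.L2Operator in
lemma continuousOn_traceNorm :
    ContinuousOn traceNorm {M : Matrix n n ℂ | M.IsHermitian} := by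
  have hcfc : ContinuousOn (cfc fun x : ℝ ↦ |x|) {M : Matrix n n ℂ | M.IsHermitian} :=
    continuousOn_id.cfc_of_mem_nhdsSet _ Filter.univ_mem (fun _ ↦ id)
      continuous_abs.continuousOn
  exact ((Complex.continuous_re.comp continuous_id.matrix_trace).comp_continuousOn hcfc).congr
    fun M hM ↦ traceNorm_eq_re_trace_cfc_abs hM

/-- The purity `Tr ρ²` of a density matrix. The trace is real when `ρ` is Hermitian; taking the
real part makes the purity a real number for every matrix. -/
def purity (ρ : Matrix n n ℂ) : ℝ := (ρ * ρ).trace.re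

lemma traceNorm_sq_le {M : Matrix n n ℂ} (hM : M.IsHermitian) :
    traceNorm M ^ 2 ≤ Fintype.card n * purity M := by
  have hpurity : purity M = ∑ i, |hM.eigenvalues i| ^ 2 := by
    rw [purity, trace_mul_self_eq_sum_sq_eigenvalues hM]
    simp [← Complex.ofReal_pow]
  rw [traceNorm, dif_pos hM, hpurity]
  exact sq_sum_le_card_mul_sum_sq

lemma purity_sub_inv_card_smul_one [Nonempty n] {ρ : Matrix n n ℂ} (htr : ρ.trace = 1) :
    purity (ρ - (Fintype.card n : ℂ)⁻¹ • 1) = purity ρ - (Fintype.card n : ℝ)⁻¹ := by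
  have htrace : ((ρ - (Fintype.card n : ℂ)⁻¹ • 1) * (ρ - (Fintype.card n : ℂ)⁻¹ • 1)).trace =
      (ρ * ρ).trace - ((Fintype.card n : ℝ)⁻¹ : ℝ) := by
    simp [sub_mul, mul_sub, htr]
  rw [purity, htrace, Complex.sub_re, Complex.ofReal_re, purity]

lemma isHermitian_sub_inv_card_smul_one {ρ : Matrix n n ℂ} (hρ : ρ.IsHermitian) :
    (ρ - (Fintype.card n : ℂ)⁻¹ • 1).IsHermitian :=
  hρ.sub (by simp [IsHermitian])

lemma traceNorm_sub_inv_card_smul_one_sq_le {ρ : Matrix n n ℂ} (hρ : ρ.IsHermitian)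
    (htr : ρ.trace = 1) :
    traceNorm (ρ - (Fintype.card n : ℂ)⁻¹ • 1) ^ 2 ≤ Fintype.card n * purity ρ - 1 := by
  have : Nonempty n := by
    by_contra! h
    simp [trace] at htr
  refine (traceNorm_sq_le (isHermitian_sub_inv_card_smul_one hρ)).trans_eq ?_
  rw [purity_sub_inv_card_smul_one htr, mul_sub, mul_inv_cancel₀ (by positivity)]

end TraceNorm

section ReducedDensityMatrix

variable {A B : Type*} [Fintype B]

lemma isHermitian_rhoA (ψ : A × B → ℂ) : (rhoA ψ).IsHermitian := by
  ext a a'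
  simp [rhoA, mul_comm]

variable [Fintype A]

lemma trace_rhoA (ψ : A × B → ℂ) : (rhoA ψ).trace = ((∑ i, ‖ψ i‖ ^ 2 : ℝ) : ℂ) := by
  simp [trace, rhoA, Fintype.sum_prod_type, Complex.mul_conj']

lemma purity_rhoA (ψ : A × B → ℂ) :
    purity (rhoA ψ) =
      ∑ p, ∑ q, (ψ p * star (ψ (q.1, p.2)) * (ψ q * star (ψ (p.1, q.2)))).re := by
  simp only [purity, trace, rhoA, diag_apply, mul_apply, of_apply, Finset.sum_mul_sum,
    Complex.re_sum, Fintype.sum_prod_type]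
  exact Finset.sum_congr rfl fun a _ ↦ Finset.sum_comm

end ReducedDensityMatrix

section UnitaryGroup

variable {n 𝕜 : Type*} [Fintype n] [DecidableEq n] [RCLike 𝕜]

instance compactSpace_unitaryGroup : CompactSpace (unitaryGroup n 𝕜) := by
  have hball : IsCompact {U : Matrix n n 𝕜 | ∀ i ∈ Set.univ, ∀ j ∈ Set.univ, ‖U i j‖ ≤ 1} := by
    simp only [← mem_closedBall_zero_iff]
    exact isCompact_univ_pi fun _ ↦ isCompact_univ_pi fun _ ↦ isCompact_closedBall 0 1
  exact isCompact_iff_compactSpace.1 <| hball.of_isClosed_subset isClosed_unitary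
    fun U hU i _ j _ ↦ entry_norm_bound_of_unitary hU i j

lemma sum_norm_sq_mulVec {U : Matrix n n 𝕜} (hU : U ∈ unitaryGroup n 𝕜) (v : n → 𝕜) :
    ∑ i, ‖(U *ᵥ v) i‖ ^ 2 = ∑ i, ‖v i‖ ^ 2 := by
  have hnorm (w : n → 𝕜) : ((∑ i, ‖w i‖ ^ 2 : ℝ) : 𝕜) = star w ⬝ᵥ w := by
    simp [dotProduct, RCLike.conj_mul]
  have hdot : star (U *ᵥ v) ⬝ᵥ (U *ᵥ v) = star v ⬝ᵥ v := by
    rw [star_mulVec, dotProduct_mulVec, vecMul_vecMul, ← star_eq_conjTranspose,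
      mem_unitaryGroup_iff'.1 hU, vecMul_one]
  exact_mod_cast (hnorm _).trans (hdot.trans (hnorm _).symm)

lemma sum_norm_sq_single_one (p : n) : ∑ i, ‖(Pi.single p 1 : n → 𝕜) i‖ ^ 2 = 1 := by
  simp [Pi.single_apply, apply_ite]

lemma exists_mem_unitaryGroup_row_eq {u : n → 𝕜} (hu : ∑ i, ‖u i‖ ^ 2 = 1) (p : n) :
    ∃ V ∈ unitaryGroup n 𝕜, V p = u := by
  have horth : Orthonormal 𝕜 (({p} : Set n).domRestrict fun _ ↦ WithLp.toLp 2 u) := by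
    refine ⟨fun _ ↦ ?_, fun i j hij ↦ (hij (Subsingleton.elim i j)).elim⟩
    simp [EuclideanSpace.norm_eq, hu]
  obtain ⟨b, hb⟩ := horth.exists_orthonormalBasis_extension_of_card_eq finrank_euclideanSpace
  refine ⟨_, transpose_mem_unitaryGroup_iff.2
    ((EuclideanSpace.basisFun n 𝕜).toMatrix_orthonormalBasis_mem_unitary b), ?_⟩
  ext i
  simp [Module.Basis.toMatrix_apply, hb p rfl]

end UnitaryGroup

lemma integrable_of_continuous_of_compactSpace {X E : Type*} [TopologicalSpace X] [CompactSpace X]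
    [MeasurableSpace X] [OpensMeasurableSpace X] [NormedAddCommGroup E]
    {μ : Measure X} [IsFiniteMeasureOnCompacts μ] {f : X → E}
    (hf : Continuous f) : Integrable f μ :=
  hf.integrable_of_hasCompactSupport (HasCompactSupport.of_compactSpace f)

lemma integral_le_sqrt_integral_of_sq_le {Ω : Type*} [MeasurableSpace Ω] {μ : Measure Ω}
    [IsProbabilityMeasure μ] {X Y : Ω → ℝ} (hX : Integrable X μ) (hY : Integrable Y μ)
    (hXY : ∀ ω, X ω ^ 2 ≤ Y ω) : ∫ ω, X ω ∂μ ≤ √(∫ ω, Y ω ∂μ) := by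
  have hX2 : Integrable (fun ω ↦ X ω ^ 2) μ :=
    hY.mono' (hX.aestronglyMeasurable.pow 2) (.of_forall fun ω ↦ by simpa using hXY ω)
  refine Real.le_sqrt_of_sq_le ?_
  calc (∫ ω, X ω ∂μ) ^ 2 ≤ ∫ ω, X ω ^ 2 ∂μ :=
        even_two.convexOn_pow.map_integral_le (continuous_pow 2).continuousOn isClosed_univ
          (.of_forall fun _ ↦ Set.mem_univ _) hX hX2
    _ ≤ ∫ ω, Y ω ∂μ := integral_mono hX2 hY hXY

lemma sum_norm_add_pow_four (x y : ℂ) :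
    ‖x + 1 * y‖ ^ 4 + ‖x + -1 * y‖ ^ 4 + ‖x + Complex.I * y‖ ^ 4 + ‖x + -Complex.I * y‖ ^ 4 =
      4 * ‖x‖ ^ 4 + 4 * ‖y‖ ^ 4 + 16 * (‖x‖ ^ 2 * ‖y‖ ^ 2) := by
  have hpow (z : ℂ) : ‖z‖ ^ 4 = (z.re ^ 2 + z.im ^ 2) ^ 2 := by
    rw [show 4 = 2 * 2 from rfl, pow_mul, Complex.sq_norm, Complex.normSq_apply, ← sq, ← sq]
  simp only [hpow, Complex.sq_norm, Complex.normSq_apply, Complex.add_re, Complex.add_im,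
    Complex.mul_re, Complex.mul_im, Complex.neg_re, Complex.neg_im, Complex.one_re,
    Complex.one_im, Complex.I_re, Complex.I_im]
  ring

section HaarState

variable {n : Type*} [Fintype n] [DecidableEq n] (μ : Measure (unitaryGroup n ℂ))

section Invariance

variable [μ.IsMulLeftInvariant] (v : n → ℂ) {E : Type*} [NormedAddCommGroup E] [NormedSpace ℝ E]

lemma integral_comp_mulVec_mulVec {V : Matrix n n ℂ} (hV : V ∈ unitaryGroup n ℂ)
    (f : (n → ℂ) → E) :
    ∫ U, f (V *ᵥ (U.1 *ᵥ v)) ∂μ = ∫ U, f (U.1 *ᵥ v) ∂μ := by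
  simpa only [mulVec_mulVec, Submonoid.coe_mul] using
    integral_mul_left_eq_self (μ := μ) (fun U : unitaryGroup n ℂ ↦ f (U.1 *ᵥ v)) ⟨V, hV⟩

lemma integral_comp_dotProduct_mulVec {u : n → ℂ} (hu : ∑ i, ‖u i‖ ^ 2 = 1) (p : n) (f : ℂ → E) :
    ∫ U, f (u ⬝ᵥ (U.1 *ᵥ v)) ∂μ = ∫ U, f ((U.1 *ᵥ v) p) ∂μ := by
  obtain ⟨V, hV, rfl⟩ := exists_mem_unitaryGroup_row_eq hu p
  exact integral_comp_mulVec_mulVec μ v hV fun ψ ↦ f (ψ p)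

lemma integral_comp_mulVec_eq_zero_of_odd (p : n) {f : (n → ℂ) → E}
    (hf : ∀ ψ, f (Function.update ψ p (-ψ p)) = -f ψ) :
    ∫ U, f (U.1 *ᵥ v) ∂μ = 0 := by
  let V : Matrix n n ℂ := diagonal (Function.update 1 p (-1))
  have hV : V ∈ unitaryGroup n ℂ := by
    rw [mem_unitaryGroup_iff, star_eq_conjTranspose, diagonal_conjTranspose,
      diagonal_mul_diagonal, ← diagonal_one]
    congr 1
    ext i
    rcases eq_or_ne i p with rfl | hi <;> simp [*]
  have hflip (ψ : n → ℂ) : V *ᵥ ψ = Function.update ψ p (-ψ p) := by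
    ext i
    rcases eq_or_ne i p with rfl | hi <;> simp [V, mulVec_diagonal, *]
  have hneg := integral_comp_mulVec_mulVec μ v hV f
  simp only [hflip, hf, integral_neg] at hneg
  have : IsAddTorsionFree E := .of_isTorsionFree ℝ E
  exact self_eq_neg.1 hneg.symm

end Invariance

section FourthMoments

variable [μ.IsMulLeftInvariant] {v : n → ℂ}

lemma integral_norm_add_mul_pow_four {p q : n} (hpq : p ≠ q) {c : ℂ} (hc : ‖c‖ = 1) :
    ∫ U, ‖(U.1 *ᵥ v) p + c * (U.1 *ᵥ v) q‖ ^ 4 ∂μ = 4 * ∫ U, ‖(U.1 *ᵥ v) p‖ ^ 4 ∂μ := by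
  let u : n → ℂ := (√2 : ℂ)⁻¹ • (Pi.single p 1 + Pi.single q c)
  have hu : ∑ i, ‖u i‖ ^ 2 = 1 := by
    rw [Fintype.sum_eq_add p q hpq]
    · norm_num [u, hpq, hpq.symm, hc]
    · rintro i ⟨hip, hiq⟩
      simp [u, hip, hiq]
  have hdot (ψ : n → ℂ) : ‖ψ p + c * ψ q‖ ^ 4 = 4 * ‖u ⬝ᵥ ψ‖ ^ 4 := by
    have hsqrt : |√2| ^ 4 = 4 := by
      rw [show 4 = 2 * 2 from rfl, pow_mul, sq_abs, Real.sq_sqrt zero_le_two]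
      norm_num
    simp [u, add_dotProduct, ← mul_add, mul_pow, hsqrt]
  simp only [hdot, integral_const_mul]
  rw [integral_comp_dotProduct_mulVec μ v hu p fun z ↦ ‖z‖ ^ 4]

lemma integral_norm_pow_four_eq (p q : n) :
    ∫ U, ‖(U.1 *ᵥ v) p‖ ^ 4 ∂μ = ∫ U, ‖(U.1 *ᵥ v) q‖ ^ 4 ∂μ := by
  simpa only [single_one_dotProduct] using
    integral_comp_dotProduct_mulVec μ v (sum_norm_sq_single_one p) q fun z ↦ ‖z‖ ^ 4

lemma integral_norm_sq_mul_norm_sq_of_ne [IsFiniteMeasureOnCompacts μ] {p q : n} (hpq : p ≠ q) :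
    ∫ U, ‖(U.1 *ᵥ v) p‖ ^ 2 * ‖(U.1 *ᵥ v) q‖ ^ 2 ∂μ = (∫ U, ‖(U.1 *ᵥ v) p‖ ^ 4 ∂μ) / 2 := by
  have hint {f : unitaryGroup n ℂ → ℝ} (hf : Continuous f) : Integrable f μ :=
    integrable_of_continuous_of_compactSpace hf
  have hrot {c : ℂ} (hc : ‖c‖ = 1) := integral_norm_add_mul_pow_four μ (v := v) hpq hc
  have key := congrArg (integral μ) <| funext fun U : unitaryGroup n ℂ ↦
    sum_norm_add_pow_four ((U.1 *ᵥ v) p) ((U.1 *ᵥ v) q)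
  rw [integral_add (hint (by fun_prop)) (hint (by fun_prop)),
    integral_add (hint (by fun_prop)) (hint (by fun_prop)),
    integral_add (hint (by fun_prop)) (hint (by fun_prop)),
    integral_add (hint (by fun_prop)) (hint (by fun_prop)),
    integral_add (hint (by fun_prop)) (hint (by fun_prop)),
    integral_const_mul, integral_const_mul, integral_const_mul] at key
  rw [hrot (by simp), hrot (by simp), hrot (by simp), hrot (by simp),
    integral_norm_pow_four_eq μ q p] at key
  linarith

variable [IsProbabilityMeasure μ]

lemma integral_norm_pow_four (hv : ∑ i, ‖v i‖ ^ 2 = 1) (p : n) :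
    ∫ U, ‖(U.1 *ᵥ v) p‖ ^ 4 ∂μ = 2 / (Fintype.card n * (Fintype.card n + 1)) := by
  set m := ∫ U, ‖(U.1 *ᵥ v) p‖ ^ 4 ∂μ with hm
  have hmoment (q r : n) : ∫ U, ‖(U.1 *ᵥ v) q‖ ^ 2 * ‖(U.1 *ᵥ v) r‖ ^ 2 ∂μ =
      m / 2 + if q = r then m / 2 else 0 := by
    split_ifs with hqr
    · subst hqr
      simp only [← pow_add, add_halves, hm, integral_norm_pow_four_eq μ p q]
    · rw [integral_norm_sq_mul_norm_sq_of_ne μ hqr, integral_norm_pow_four_eq μ q p, add_zero]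
  have htotal : ∑ q, ∑ r, ∫ U, ‖(U.1 *ᵥ v) q‖ ^ 2 * ‖(U.1 *ᵥ v) r‖ ^ 2 ∂μ = 1 := by
    have hint (q r : n) :
        Integrable (fun U ↦ ‖(U.1 *ᵥ v) q‖ ^ 2 * ‖(U.1 *ᵥ v) r‖ ^ 2) μ :=
      integrable_of_continuous_of_compactSpace (by fun_prop)
    simp_rw [← integral_finsetSum _ fun r _ ↦ hint _ r]
    rw [← integral_finsetSum _ fun q _ ↦ integrable_finsetSum _ fun r _ ↦ hint q r]
    simp_rw [← Finset.sum_mul_sum, sum_norm_sq_mulVec (Subtype.prop _), hv]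
    simp
  have hcard : (0 : ℝ) < Fintype.card n := by exact_mod_cast Fintype.card_pos_iff.2 ⟨p⟩
  simp only [hmoment, Finset.sum_add_distrib, Finset.sum_ite_eq, Finset.mem_univ, if_true,
    Finset.sum_const, Finset.card_univ, nsmul_eq_mul] at htotal
  rw [eq_div_iff (by positivity)]
  linarith

lemma integral_norm_sq_mul_norm_sq (hv : ∑ i, ‖v i‖ ^ 2 = 1) (p q : n) :
    ∫ U, ‖(U.1 *ᵥ v) p‖ ^ 2 * ‖(U.1 *ᵥ v) q‖ ^ 2 ∂μ =
      (1 + if p = q then 1 else 0) / (Fintype.card n * (Fintype.card n + 1)) := by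
  split_ifs with hpq
  · subst hpq
    simp only [← pow_add]
    rw [integral_norm_pow_four μ hv p, one_add_one_eq_two]
  · rw [integral_norm_sq_mul_norm_sq_of_ne μ hpq, integral_norm_pow_four μ hv p]
    ring

end FourthMoments

end HaarState

section PageLubkinLloyd

variable {A B : Type*} [Fintype A] [Fintype B] [DecidableEq A] [DecidableEq B]
  (μ : Measure (unitaryGroup (A × B) ℂ)) [μ.IsMulLeftInvariant] [IsProbabilityMeasure μ]
  {v : A × B → ℂ}

lemma integral_purity_rhoA_term (hv : ∑ i, ‖v i‖ ^ 2 = 1) (a a' : A) (b b' : B) :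
    ∫ U, ((U.1 *ᵥ v) (a, b) * star ((U.1 *ᵥ v) (a', b)) *
        ((U.1 *ᵥ v) (a', b') * star ((U.1 *ᵥ v) (a, b')))).re ∂μ =
      ((if a = a' then 1 else 0) + if b = b' then 1 else 0) /
        (Fintype.card (A × B) * (Fintype.card (A × B) + 1)) := by
  have hnorm (x y : ℂ) : (x * star x * (y * star y)).re = ‖x‖ ^ 2 * ‖y‖ ^ 2 := by
    simp [Complex.mul_conj', ← Complex.ofReal_pow]
  rcases eq_or_ne a a' with rfl | ha
  · simp only [hnorm, integral_norm_sq_mul_norm_sq μ hv, Prod.mk.injEq, true_and, if_true]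
  rcases eq_or_ne b b' with rfl | hb
  · have hswap (x y : ℂ) : (x * star y * (y * star x)).re = ‖x‖ ^ 2 * ‖y‖ ^ 2 := by
      rw [← hnorm]
      ring_nf
    simp only [hswap, integral_norm_sq_mul_norm_sq μ hv, Prod.mk.injEq, ha, false_and, if_true,
      if_false, add_comm]
  · rw [if_neg ha, if_neg hb, add_zero, zero_div]
    refine integral_comp_mulVec_eq_zero_of_odd μ v (a, b) (f := fun ψ ↦
      (ψ (a, b) * star (ψ (a', b)) * (ψ (a', b') * star (ψ (a, b')))).re) fun ψ ↦ ?_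
    simp [ha.symm, hb.symm]

lemma integral_purity_rhoA (hv : ∑ i, ‖v i‖ ^ 2 = 1) :
    ∫ U, purity (rhoA (U.1 *ᵥ v)) ∂μ =
      (Fintype.card A + Fintype.card B) / (Fintype.card A * Fintype.card B + 1) := by
  have hint (p q : A × B) : Integrable (fun U ↦ ((U.1 *ᵥ v) p * star ((U.1 *ᵥ v) (q.1, p.2)) *
      ((U.1 *ᵥ v) q * star ((U.1 *ᵥ v) (p.1, q.2)))).re) μ :=
    integrable_of_continuous_of_compactSpace (by fun_prop)
  have hAB : Nonempty (A × B) := by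
    by_contra! h
    simp at hv
  obtain ⟨hA, hB⟩ := nonempty_prod.1 hAB
  simp only [purity_rhoA]
  rw [integral_finsetSum _ fun p _ ↦ integrable_finsetSum _ fun q _ ↦ hint p q]
  simp_rw [integral_finsetSum _ fun q _ ↦ hint _ q, Fintype.sum_prod_type,
    integral_purity_rhoA_term μ hv, ← Finset.sum_div, Finset.sum_add_distrib]
  simp only [Finset.sum_const, Finset.card_univ, nsmul_eq_mul, ← Finset.mul_sum,
    Finset.sum_ite_eq, Finset.mem_univ, if_true, mul_one, Fintype.card_prod, Nat.cast_mul]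
  field_simp
  ring

theorem page_lubkin_lloyd_bound_general (hv : ∑ i, ‖v i‖ ^ 2 = 1) :
    ∫ U, traceNorm (rhoA (U.1 *ᵥ v) - (Fintype.card A : ℂ)⁻¹ • 1) ∂μ ≤
      √((Fintype.card A ^ 2 - 1) / (Fintype.card A * Fintype.card B + 1)) := by
  have hrhoA : Continuous fun U : unitaryGroup (A × B) ℂ ↦ rhoA (U.1 *ᵥ v) := by
    unfold rhoA
    fun_prop
  have hdist : Continuous fun U : unitaryGroup (A × B) ℂ ↦
      traceNorm (rhoA (U.1 *ᵥ v) - (Fintype.card A : ℂ)⁻¹ • 1) :=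
    continuousOn_traceNorm.comp_continuous (by fun_prop) fun _ ↦
      isHermitian_sub_inv_card_smul_one (isHermitian_rhoA _)
  have hpurity : Integrable (fun U ↦ Fintype.card A * purity (rhoA (U.1 *ᵥ v))) μ := by
    refine integrable_of_continuous_of_compactSpace ?_
    unfold purity
    fun_prop
  have htrace (U : unitaryGroup (A × B) ℂ) : (rhoA (U.1 *ᵥ v)).trace = 1 := by
    rw [trace_rhoA, sum_norm_sq_mulVec U.2, hv, Complex.ofReal_one]
  calc ∫ U, traceNorm (rhoA (U.1 *ᵥ v) - (Fintype.card A : ℂ)⁻¹ • 1) ∂μ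
      ≤ √(∫ U, (Fintype.card A * purity (rhoA (U.1 *ᵥ v)) - 1) ∂μ) :=
        integral_le_sqrt_integral_of_sq_le (integrable_of_continuous_of_compactSpace hdist)
          (hpurity.sub (integrable_const 1)) fun U ↦
            traceNorm_sub_inv_card_smul_one_sq_le (isHermitian_rhoA _) (htrace U)
    _ = √((Fintype.card A ^ 2 - 1) / (Fintype.card A * Fintype.card B + 1)) := by
        rw [integral_sub hpurity (integrable_const 1), integral_const_mul,
          integral_purity_rhoA μ hv, integral_const, probReal_univ, one_smul]
        congr 1
        field_simp
        ring

end PageLubkinLloyd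

lemma sq_sub_one_div_mul_add_one_le {a b : ℝ} (ha : 0 ≤ a) (hb : 0 < b) :
    (a ^ 2 - 1) / (a * b + 1) ≤ a / b := by
  rw [div_le_div_iff₀ (by positivity) hb]
  linarith

/-- **Page–Lubkin–Lloyd bound.** For `ψ = U e₁` a Haar random state on
`ℂ^{d_A} ⊗ ℂ^{d_B}` (with `e₁` a fixed standard basis vector), the Haar-expected
trace-norm distance of `ρ_A` from the maximally mixed state is at most
`√(d_A/d_B)`. -/
theorem page_lubkin_lloyd_bound (dA dB : ℕ) (hdA : 0 < dA) (hdB : 0 < dB)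
    (μ : Measure (Matrix.unitaryGroup (Fin dA × Fin dB) ℂ))
    (hHaar : μ.IsHaarMeasure) (hProb : IsProbabilityMeasure μ) :
    (∫ U : Matrix.unitaryGroup (Fin dA × Fin dB) ℂ,
        traceNorm (rhoA (fun p => U.1 p (⟨0, hdA⟩, ⟨0, hdB⟩))
          - ((dA : ℂ))⁻¹ • (1 : Matrix (Fin dA) (Fin dA) ℂ)) ∂μ)
      ≤ Real.sqrt ((dA : ℝ) / (dB : ℝ)) := by
  have hsharp := page_lubkin_lloyd_bound_general μ (sum_norm_sq_single_one (⟨0, hdA⟩, ⟨0, hdB⟩))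
  simp only [mulVec_single_one, Fintype.card_fin] at hsharp
  exact hsharp.trans <| Real.sqrt_le_sqrt <|
    sq_sub_one_div_mul_add_one_le dA.cast_nonneg (Nat.cast_pos.2 hdB)
end
end

section
/- Let d_A, d_B be positive integers, let μ be the Haar probability measure on the unitary group U(d_A·d_B), and for U ∈ U(d_A·d_B) let ρ_A(U) be the reduced density matrix on ℂ^{d_A} of the unit vector U e₁ ∈ ℂ^{d_A}⊗ℂ^{d_B}. Then the Haar-expected purity is exactly ∫ Tr(ρ_A(U)²) dμ(U) = (d_A + d_B)/(d_A·d_B + 1). -/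
/-!
Lubkin's exact second-moment formula: for a Haar random bipartite pure state
`ψ = U e₁` on `ℂ^{d_A} ⊗ ℂ^{d_B}`, the Haar-expected purity of the reduced state
is exactly `E Tr(ρ_A²) = (d_A + d_B)/(d_A d_B + 1)`.
-/

open MeasureTheory Matrix

noncomputable section

/-!
The law of `Uφ` is invariant under unitary maps, and this alone determines its fourth moments
`E[ψᵢ ψ̄ⱼ ψₖ ψ̄ₗ]`. Diagonal phases kill every moment whose conjugated indices are not a permutation
of its unconjugated ones. A unitary whose row `i` is the unit vector `v` gives
`E|v ⬝ ψ|⁴ = E|ψᵢ|⁴`; averaging this over `v = (eᵢ + c eⱼ)/√2` with `c⁴ = 1` yields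
`E|ψᵢ|⁴ = 2 E|ψᵢ|²|ψⱼ|²`. The relation `(∑ᵢ |ψᵢ|²)² = 1` fixes the remaining constant, so that
`E[ψᵢ ψ̄ⱼ ψₖ ψ̄ₗ] = (δᵢⱼ δₖₗ + δᵢₗ δₖⱼ) / (n (n + 1))`, and the purity is a sum of such moments.
-/

section UnitaryMatrices

variable {I : Type*} [Fintype I] [DecidableEq I]

theorem exists_mem_unitaryGroup_row_eq_s6 {𝕜 : Type*} [RCLike 𝕜] {v : I → 𝕜}
    (hv : star v ⬝ᵥ v = 1) (i : I) :
    ∃ V ∈ unitaryGroup I 𝕜, V i = v := by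
  have hunit : Orthonormal 𝕜 (({i} : Set I).domRestrict fun _ => WithLp.toLp 2 v) := by
    rw [orthonormal_subsingleton_iff]
    intro _
    have hnorm : ((‖WithLp.toLp 2 v‖ ^ 2 : ℝ) : 𝕜) = 1 := by
      rw [RCLike.ofReal_pow, ← inner_self_eq_norm_sq_to_K (𝕜 := 𝕜),
        EuclideanSpace.inner_toLp_toLp, dotProduct_comm, hv]
    exact (pow_eq_one_iff_of_nonneg (norm_nonneg _) two_ne_zero).1 (by exact_mod_cast hnorm)
  obtain ⟨b, hb⟩ := hunit.exists_orthonormalBasis_extension_of_card_eq finrank_euclideanSpace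
  refine ⟨((EuclideanSpace.basisFun I 𝕜).toBasis.toMatrix b)ᵀ, ?_, ?_⟩
  · exact transpose_mem_unitaryGroup_iff.2
      ((EuclideanSpace.basisFun I 𝕜).toMatrix_orthonormalBasis_mem_unitary b)
  · ext j
    simp [Module.Basis.toMatrix_apply, hb i rfl]

variable {R : Type*} [CommRing R] [StarRing R]

theorem diagonal_mem_unitaryGroup {c : I → R} (hc : ∀ i, c i * star (c i) = 1) :
    diagonal c ∈ unitaryGroup I R := by
  rw [mem_unitaryGroup_iff, star_eq_conjTranspose, diagonal_conjTranspose, diagonal_mul_diagonal]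
  simp only [Pi.star_apply, hc, diagonal_one]

theorem star_mulVec_dotProduct_mulVec {V : Matrix I I R} (hV : V ∈ unitaryGroup I R) (x : I → R) :
    star (V *ᵥ x) ⬝ᵥ (V *ᵥ x) = star x ⬝ᵥ x := by
  rw [star_mulVec, ← dotProduct_mulVec, mulVec_mulVec, ← star_eq_conjTranspose,
    mem_unitaryGroup_iff'.1 hV, one_mulVec]

end UnitaryMatrices

section HaarStates

open scoped ComplexConjugate

variable {I : Type*}

/-- The mixed fourth moment `E[ψᵢ ψ̄ⱼ ψₖ ψ̄ₗ]` of a random vector with distribution `ν`. -/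
def fourthMoment (ν : Measure (I → ℂ)) (i j k l : I) : ℂ :=
  ∫ ψ, ψ i * conj (ψ j) * (ψ k * conj (ψ l)) ∂ν

theorem fourthMoment_swap (ν : Measure (I → ℂ)) (i j k l : I) :
    fourthMoment ν i j k l = fourthMoment ν i l k j := by
  unfold fourthMoment
  congr with ψ
  ring

theorem sum_I_pow_phase_quartic (x y : ℂ) :
    ∑ m ∈ Finset.range 4, (x + Complex.I ^ m * y) * conj (x + Complex.I ^ m * y) *
        ((x + Complex.I ^ m * y) * conj (x + Complex.I ^ m * y)) =
      4 * (x * conj x * (x * conj x)) + 4 * (y * conj y * (y * conj y)) +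
        16 * (x * conj x * (y * conj y)) := by
  simp only [Finset.sum_range_succ, Finset.sum_range_zero, pow_zero, pow_one, Complex.I_sq,
    Complex.I_pow_three, map_add, map_mul, map_neg, map_one, Complex.conj_I]
  linear_combination 2 * ((conj x * y - x * conj y) ^ 2 - 2 * x * conj x * y * conj y +
    (Complex.I ^ 2 - 1) * (y * conj y) ^ 2) * Complex.I_sq

variable [DecidableEq I]

theorem update_one_I_mul_conj (i m : I) :
    Function.update (1 : I → ℂ) i Complex.I m *
      conj (Function.update (1 : I → ℂ) i Complex.I m) = 1 := by
  by_cases hm : m = i <;> simp [hm]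

variable [Fintype I]

/-- `ν` is the distribution of a Haar random pure state in `ℂ^I`: it is carried by the unit sphere
and invariant under unitary maps. Total mass one is not included. -/
structure IsHaarState (ν : Measure (I → ℂ)) : Prop where
  ae_unit : ∀ᵐ ψ ∂ν, star ψ ⬝ᵥ ψ = 1
  measurePreserving : ∀ V ∈ unitaryGroup I ℂ, MeasurePreserving (V *ᵥ ·) ν ν

theorem isHaarState_map_mulVec (μ : Measure (unitaryGroup I ℂ)) [μ.IsMulLeftInvariant]
    {φ : I → ℂ} (hφ : star φ ⬝ᵥ φ = 1) : IsHaarState (μ.map fun U => U.1 *ᵥ φ) where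
  ae_unit := by
    have hsphere : MeasurableSet {ψ : I → ℂ | star ψ ⬝ᵥ ψ = 1} :=
      (isClosed_eq (by fun_prop) continuous_const).measurableSet
    rw [ae_map_iff (by fun_prop) hsphere]
    exact .of_forall fun U => (star_mulVec_dotProduct_mulVec U.2 φ).trans hφ
  measurePreserving V hV := by
    refine ⟨by fun_prop, ?_⟩
    rw [Measure.map_map (by fun_prop) (by fun_prop)]
    conv_rhs => rw [← map_mul_left_eq_self μ ⟨V, hV⟩, Measure.map_map (by fun_prop) (by fun_prop)]
    congr 1
    ext U : 1
    exact mulVec_mulVec φ V U.1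

namespace IsHaarState

variable {ν : Measure (I → ℂ)}

theorem integral_comp_mulVec {E : Type*} [NormedAddCommGroup E] [NormedSpace ℝ E]
    (hν : IsHaarState ν) {V : Matrix I I ℂ} (hV : V ∈ unitaryGroup I ℂ) {f : (I → ℂ) → E}
    (hf : Continuous f) : ∫ ψ, f (V *ᵥ ψ) ∂ν = ∫ ψ, f ψ ∂ν := by
  have hpres := hν.measurePreserving V hV
  conv_rhs => rw [← hpres.map_eq]
  exact (integral_map hpres.aemeasurable hf.aestronglyMeasurable).symm

theorem integrable {E : Type*} [NormedAddCommGroup E] [IsFiniteMeasure ν] (hν : IsHaarState ν)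
    {f : (I → ℂ) → E} (hf : Continuous f) : Integrable f ν := by
  obtain ⟨C, hC⟩ := (isCompact_closedBall (0 : I → ℂ) 1).exists_bound_of_continuousOn
    hf.continuousOn
  refine .of_bound hf.aestronglyMeasurable C (hν.ae_unit.mono fun ψ hψ => hC ψ ?_)
  have hsum : ∑ i, ‖ψ i‖ ^ 2 = 1 := by
    simp only [dotProduct, Pi.star_apply, RCLike.star_def, RCLike.conj_mul] at hψ
    exact Complex.ofReal_injective (by push_cast; exact hψ)
  rw [mem_closedBall_zero_iff, pi_norm_le_iff_of_nonneg zero_le_one]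
  intro i
  rw [← sq_le_one_iff₀ (norm_nonneg _), ← hsum]
  exact Finset.single_le_sum (f := fun i => ‖ψ i‖ ^ 2) (fun _ _ => sq_nonneg _)
    (Finset.mem_univ i)

theorem integral_sum_sum {J K E : Type*} [Fintype J] [Fintype K] [NormedAddCommGroup E]
    [NormedSpace ℝ E] [IsFiniteMeasure ν] (hν : IsHaarState ν) {f : J → K → (I → ℂ) → E}
    (hf : ∀ j k, Continuous (f j k)) :
    ∫ ψ, ∑ j, ∑ k, f j k ψ ∂ν = ∑ j, ∑ k, ∫ ψ, f j k ψ ∂ν := by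
  rw [integral_finsetSum _ fun j _ => hν.integrable (by fun_prop)]
  exact Finset.sum_congr rfl fun j _ => integral_finsetSum _ fun k _ => hν.integrable (hf j k)

theorem nonempty [NeZero ν] (hν : IsHaarState ν) : Nonempty I := by
  obtain ⟨ψ, hψ⟩ := hν.ae_unit.exists
  by_contra hI
  rw [not_nonempty_iff] at hI
  simp at hψ

theorem fourthMoment_phase (hν : IsHaarState ν) {c : I → ℂ} (hc : ∀ i, c i * conj (c i) = 1)
    (i j k l : I) :
    c i * conj (c j) * (c k * conj (c l)) * fourthMoment ν i j k l = fourthMoment ν i j k l := by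
  unfold fourthMoment
  rw [← integral_const_mul]
  conv_rhs => rw [← hν.integral_comp_mulVec (diagonal_mem_unitaryGroup hc) (by fun_prop)]
  congr with ψ
  simp only [mulVec_diagonal, map_mul]
  ring

theorem fourthMoment_eq_zero (hν : IsHaarState ν) {i j l : I} (hij : i ≠ j) (hil : i ≠ l) (k : I) :
    fourthMoment ν i j k l = 0 := by
  have hphase := hν.fourthMoment_phase (update_one_I_mul_conj i) i j k l
  refine (mul_left_eq_self₀.1 hphase).resolve_left ?_
  by_cases hki : k = i <;> norm_num [hij.symm, hil.symm, hki, Complex.ext_iff]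

theorem fourthMoment_self_left_eq_zero (hν : IsHaarState ν) (i : I) {k l : I} (hkl : k ≠ l) :
    fourthMoment ν i i k l = 0 := by
  have hphase := hν.fourthMoment_phase (update_one_I_mul_conj k) i i k l
  refine (mul_left_eq_self₀.1 hphase).resolve_left ?_
  simp [update_one_I_mul_conj, hkl.symm, Complex.ext_iff]

theorem integral_dotProduct_quartic (hν : IsHaarState ν) {v : I → ℂ} (hv : star v ⬝ᵥ v = 1)
    (i : I) :
    ∫ ψ, (v ⬝ᵥ ψ) * conj (v ⬝ᵥ ψ) * ((v ⬝ᵥ ψ) * conj (v ⬝ᵥ ψ)) ∂ν = fourthMoment ν i i i i := by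
  obtain ⟨V, hV, rfl⟩ := exists_mem_unitaryGroup_row_eq_s6 hv i
  exact hν.integral_comp_mulVec hV (f := fun ψ => ψ i * conj (ψ i) * (ψ i * conj (ψ i)))
    (by fun_prop)

theorem fourthMoment_self_eq_self (hν : IsHaarState ν) (i j : I) :
    fourthMoment ν j j j j = fourthMoment ν i i i i := by
  simpa [fourthMoment] using hν.integral_dotProduct_quartic (v := Pi.single j 1) (by simp) i

theorem integral_add_phase_mul_quartic (hν : IsHaarState ν) {i j : I} (hij : i ≠ j) {c : ℂ}
    (hc : c * conj c = 1) :
    ∫ ψ, (ψ i + c * ψ j) * conj (ψ i + c * ψ j) * ((ψ i + c * ψ j) * conj (ψ i + c * ψ j)) ∂ν =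
      4 * fourthMoment ν i i i i := by
  obtain ⟨s, hs⟩ : ∃ s : ℂ, s * conj s = 1 / 2 :=
    ⟨⟨1 / 2, 1 / 2⟩, by norm_num [Complex.ext_iff]⟩
  have hunit : star (Pi.single i s + Pi.single j (s * c) : I → ℂ) ⬝ᵥ
      (Pi.single i s + Pi.single j (s * c)) = 1 := by
    simp only [star_add, Pi.star_single, RCLike.star_def, star_mul', dotProduct_add,
      dotProduct_single, Pi.add_apply, Pi.single_eq_same, ne_eq, hij, hij.symm, not_false_eq_true,
      Pi.single_eq_of_ne, add_zero, zero_add]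
    linear_combination (1 + c * conj c) * hs + 1 / 2 * hc
  rw [← hν.integral_dotProduct_quartic hunit i, ← integral_const_mul]
  congr with ψ
  simp only [add_dotProduct, single_dotProduct, map_add, map_mul]
  linear_combination (-4 * (s * conj s) - 2) * (ψ i + c * ψ j) ^ 2 *
    (conj (ψ i) + conj c * conj (ψ j)) ^ 2 * hs

theorem fourthMoment_self_eq_two_mul [IsFiniteMeasure ν] (hν : IsHaarState ν) {i j : I}
    (hij : i ≠ j) : fourthMoment ν i i i i = 2 * fourthMoment ν i i j j := by
  have hphase (m : ℕ) : Complex.I ^ m * conj (Complex.I ^ m) = 1 := by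
    rw [Complex.mul_conj, map_pow, Complex.normSq_I, one_pow, Complex.ofReal_one]
  have haverage : 16 * fourthMoment ν i i i i = 4 * fourthMoment ν i i i i +
      4 * fourthMoment ν j j j j + 16 * fourthMoment ν i i j j := by
    calc 16 * fourthMoment ν i i i i
      _ = ∑ m ∈ Finset.range 4, ∫ ψ, (ψ i + Complex.I ^ m * ψ j) *
            conj (ψ i + Complex.I ^ m * ψ j) * ((ψ i + Complex.I ^ m * ψ j) *
            conj (ψ i + Complex.I ^ m * ψ j)) ∂ν := by
        simp only [hν.integral_add_phase_mul_quartic hij (hphase _), Finset.sum_const,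
          Finset.card_range, nsmul_eq_mul]
        ring
      _ = _ := by
        rw [← integral_finsetSum _ fun m _ => hν.integrable (by fun_prop)]
        simp only [sum_I_pow_phase_quartic]
        rw [integral_add (hν.integrable (by fun_prop)) (hν.integrable (by fun_prop)),
          integral_add (hν.integrable (by fun_prop)) (hν.integrable (by fun_prop)),
          integral_const_mul, integral_const_mul, integral_const_mul]
        rfl
  rw [hν.fourthMoment_self_eq_self i j] at haverage
  linear_combination haverage / 8

theorem sum_fourthMoment [IsProbabilityMeasure ν] (hν : IsHaarState ν) :
    ∑ i, ∑ j, fourthMoment ν i i j j = 1 := by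
  unfold fourthMoment
  calc ∑ i, ∑ j, ∫ ψ, ψ i * conj (ψ i) * (ψ j * conj (ψ j)) ∂ν
    _ = ∫ ψ, ∑ i, ∑ j, ψ i * conj (ψ i) * (ψ j * conj (ψ j)) ∂ν :=
      (hν.integral_sum_sum fun i j => by fun_prop).symm
    _ = ∫ ψ, (star ψ ⬝ᵥ ψ) * (star ψ ⬝ᵥ ψ) ∂ν := by
      simp only [← Finset.sum_mul_sum, dotProduct, Pi.star_apply, RCLike.star_def, mul_comm]
    _ = ∫ _, 1 ∂ν := integral_congr_ae (hν.ae_unit.mono fun ψ hψ => by simp only [hψ, mul_one])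
    _ = 1 := by simp

theorem fourthMoment_self [IsProbabilityMeasure ν] (hν : IsHaarState ν) (i : I) :
    fourthMoment ν i i i i = 2 / (Fintype.card I * (Fintype.card I + 1)) := by
  have : Nonempty I := ⟨i⟩
  have hpair (j k : I) : fourthMoment ν j j k k =
      fourthMoment ν i i i i / 2 * (1 + if j = k then 1 else 0) := by
    rw [hν.fourthMoment_self_eq_self j i]
    split_ifs with hjk
    · rw [hjk]
      ring
    · rw [hν.fourthMoment_self_eq_two_mul hjk]
      ring
  have hsum := hν.sum_fourthMoment
  generalize fourthMoment ν i i i i = C at hpair ⊢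
  simp only [hpair, ← Finset.mul_sum, Finset.sum_add_distrib, Finset.sum_ite_eq,
    Finset.mem_univ, if_true, Finset.sum_const, Finset.card_univ, nsmul_eq_mul, mul_one] at hsum
  rw [eq_div_iff (by norm_cast; positivity)]
  linear_combination 2 * hsum

theorem fourthMoment_self_self [IsProbabilityMeasure ν] (hν : IsHaarState ν) (i k l : I) :
    fourthMoment ν i i k l = ((if k = l then 1 else 0) + if i = l ∧ k = i then 1 else 0) /
      (Fintype.card I * (Fintype.card I + 1)) := by
  by_cases hkl : k = l
  · subst hkl
    by_cases hik : i = k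
    · subst hik
      simp [hν.fourthMoment_self, one_add_one_eq_two]
    · have hself := hν.fourthMoment_self_eq_two_mul hik
      rw [hν.fourthMoment_self] at hself
      simp only [if_true, hik, false_and, if_false]
      linear_combination -hself / 2
  · have hil : ¬(i = l ∧ k = i) := fun h => hkl (h.2.trans h.1)
    simp [hν.fourthMoment_self_left_eq_zero i hkl, hkl, hil]

theorem fourthMoment_eq [IsProbabilityMeasure ν] (hν : IsHaarState ν) (i j k l : I) :
    fourthMoment ν i j k l =
      ((if i = j ∧ k = l then 1 else 0) + if i = l ∧ k = j then 1 else 0) /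
        (Fintype.card I * (Fintype.card I + 1)) := by
  by_cases hij : i = j
  · subst hij
    simpa using hν.fourthMoment_self_self i k l
  by_cases hil : i = l
  · subst hil
    rw [fourthMoment_swap, hν.fourthMoment_self_self]
    simp [hij]
  · simp [hν.fourthMoment_eq_zero hij hil, hij, hil]

end IsHaarState

end HaarStates

section Purity

open scoped ComplexConjugate

variable {IA IB : Type*} [Fintype IA] [Fintype IB]

theorem trace_rhoA_mul_self (ψ : IA × IB → ℂ) :
    trace (rhoA ψ * rhoA ψ) =
      ∑ p, ∑ q, ψ p * conj (ψ (q.1, p.2)) * (ψ q * conj (ψ (p.1, q.2))) := by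
  simp only [trace, diag_apply, mul_apply, rhoA, of_apply, Finset.sum_mul_sum,
    Fintype.sum_prod_type]
  exact Finset.sum_congr rfl fun a _ => Finset.sum_comm

variable [DecidableEq IA] [DecidableEq IB]

theorem sum_sum_ite_fst_eq_add_ite_snd_eq (R : Type*) [CommSemiring R] :
    ∑ p : IA × IB, ∑ q : IA × IB,
      ((if p.1 = q.1 then (1 : R) else 0) + if p.2 = q.2 then 1 else 0) =
        Fintype.card IA * Fintype.card IB * (Fintype.card IA + Fintype.card IB) := by
  calc ∑ p : IA × IB, ∑ q : IA × IB,
      ((if p.1 = q.1 then (1 : R) else 0) + if p.2 = q.2 then 1 else 0)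
    _ = ∑ a : IA, ∑ b : IB, ∑ a', ∑ b',
        ((if a = a' then (1 : R) else 0) + if b = b' then 1 else 0) := by
      simp only [Fintype.sum_prod_type]
    _ = _ := by
      simp only [Finset.sum_add_distrib, ← Finset.mul_sum, Finset.sum_const, Finset.card_univ,
        nsmul_eq_mul, mul_one, Finset.sum_ite_eq, Finset.mem_univ, if_true]
      ring

theorem IsHaarState.integral_trace_rhoA_mul_self {ν : Measure (IA × IB → ℂ)}
    [IsProbabilityMeasure ν] (hν : IsHaarState ν) :
    ∫ ψ, trace (rhoA ψ * rhoA ψ) ∂ν = ((Fintype.card IA : ℂ) + Fintype.card IB) /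
      (Fintype.card IA * Fintype.card IB + 1) := by
  have hindices (p q : IA × IB) :
      fourthMoment ν p (q.1, p.2) q (p.1, q.2) =
        ((if p.1 = q.1 then 1 else 0) + if p.2 = q.2 then 1 else 0) /
          (Fintype.card (IA × IB) * (Fintype.card (IA × IB) + 1)) := by
    rw [hν.fourthMoment_eq]
    simp [Prod.ext_iff, eq_comm]
  have hcard : (Fintype.card IA : ℂ) * Fintype.card IB ≠ 0 := by
    have := hν.nonempty
    rw [← Nat.cast_mul, ← Fintype.card_prod]
    exact Nat.cast_ne_zero.2 Fintype.card_ne_zero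
  calc ∫ ψ, trace (rhoA ψ * rhoA ψ) ∂ν
    _ = ∑ p, ∑ q, fourthMoment ν p (q.1, p.2) q (p.1, q.2) := by
      simp only [trace_rhoA_mul_self, fourthMoment]
      exact hν.integral_sum_sum fun p q => by fun_prop
    _ = _ := by
      simp only [hindices, ← Finset.sum_div, sum_sum_ite_fst_eq_add_ite_snd_eq,
        Fintype.card_prod, Nat.cast_mul]
      exact mul_div_mul_left _ _ hcard

theorem lubkin_purity_formula_general (μ : Measure (unitaryGroup (IA × IB) ℂ))
    [μ.IsMulLeftInvariant] [IsProbabilityMeasure μ] {φ : IA × IB → ℂ} (hφ : star φ ⬝ᵥ φ = 1) :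
    ∫ U, (trace (rhoA (U.1 *ᵥ φ) * rhoA (U.1 *ᵥ φ))).re ∂μ =
      ((Fintype.card IA : ℝ) + Fintype.card IB) / (Fintype.card IA * Fintype.card IB + 1) := by
  have hφmeas : AEMeasurable (fun U : unitaryGroup (IA × IB) ℂ => U.1 *ᵥ φ) μ :=
    Measurable.aemeasurable (by fun_prop)
  have : IsProbabilityMeasure (μ.map fun U => U.1 *ᵥ φ) :=
    Measure.isProbabilityMeasure_map hφmeas
  have hν := isHaarState_map_mulVec μ hφ
  have hcont : Continuous fun ψ : IA × IB → ℂ => trace (rhoA ψ * rhoA ψ) := by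
    simp only [trace_rhoA_mul_self]
    fun_prop
  calc ∫ U, (trace (rhoA (U.1 *ᵥ φ) * rhoA (U.1 *ᵥ φ))).re ∂μ
    _ = ∫ ψ, (trace (rhoA ψ * rhoA ψ)).re ∂μ.map fun U => U.1 *ᵥ φ :=
      (integral_map hφmeas (Complex.continuous_re.comp hcont).aestronglyMeasurable).symm
    _ = (∫ ψ, trace (rhoA ψ * rhoA ψ) ∂μ.map fun U => U.1 *ᵥ φ).re :=
      integral_re (hν.integrable hcont)
    _ = _ := by
      rw [hν.integral_trace_rhoA_mul_self]
      norm_cast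
      rw [Complex.div_natCast_re, Complex.natCast_re]

end Purity

/-- **Lubkin's formula.** For `ψ = U e₁` a Haar random state on
`ℂ^{d_A} ⊗ ℂ^{d_B}` (with `e₁` a fixed standard basis vector), the Haar-expected
purity of the reduced state `ρ_A` is exactly `(d_A + d_B)/(d_A d_B + 1)`. -/
theorem lubkin_purity_formula (dA dB : ℕ) (hdA : 0 < dA) (hdB : 0 < dB)
    (μ : Measure (Matrix.unitaryGroup (Fin dA × Fin dB) ℂ))
    (hHaar : μ.IsHaarMeasure) (hProb : IsProbabilityMeasure μ) :
    (∫ U : Matrix.unitaryGroup (Fin dA × Fin dB) ℂ,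
        (Matrix.trace (rhoA (fun p => U.1 p (⟨0, hdA⟩, ⟨0, hdB⟩)) *
                       rhoA (fun p => U.1 p (⟨0, hdA⟩, ⟨0, hdB⟩)))).re ∂μ)
      = ((dA : ℝ) + (dB : ℝ)) / ((dA : ℝ) * (dB : ℝ) + 1) := by
  simpa [mulVec_single_one] using! lubkin_purity_formula_general μ
    (φ := Pi.single ((⟨0, hdA⟩, ⟨0, hdB⟩) : Fin dA × Fin dB) 1) (by simp)
end
end
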